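/- arXiv:2503.06694 — 3 statements merged into one kernel-verified Lean document; each statement's English description precedes it below -/
import Mathlib

section
/- Let L be a simple graded ℤ-graded Lie conformal algebra as in the structure context (every nonzero component free of rank one over ℂ[∂], 0 ∈ Supp(L), L₀ abelian). Suppose k ∈ Supp(L) satisfies p_{0,k}(λ) = 0. Then there exists m ∈ Supp(L) such that p_{0,m}(λ) ≠ 0 and p_{m,k−m}(∂,λ) ≠ 0. In particular, Supp₁(L) is not empty. -/
open scoped BigOperators Classical ENNReal
open Polynomial

noncomputable section

/-- A Lie conformal algebra over `ℂ`, encoded via its `n`-th products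
`a_(n) b` and the operator `∂ = D`.  The `λ`-bracket is
`[a_λ b] = ∑ₙ (λⁿ/n!) • (a_(n) b)`. -/
structure LieConformalAlgebra (L : Type) [AddCommGroup L] [Module ℂ L] : Type where
  D : L →ₗ[ℂ] L
  prd : ℕ → L →ₗ[ℂ] L →ₗ[ℂ] L
  bound : ∀ a b : L, ∃ N : ℕ, ∀ n : ℕ, N ≤ n → prd n a b = 0
  sesq : ∀ (n : ℕ) (a b : L), prd n (D a) b = (-(n : ℂ)) • prd (n - 1) a b
  sesq' : ∀ (n : ℕ) (a b : L),
    prd n a (D b) = D (prd n a b) + (n : ℂ) • prd (n - 1) a b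
  skew : ∀ (n : ℕ) (a b : L),
    prd n a b
      = - ∑ᶠ j : ℕ, ((-1 : ℂ) ^ (n + j) * ((Nat.factorial j : ℂ))⁻¹) • (⇑D)^[j] (prd (n + j) b a)
  jacobi : ∀ (m n : ℕ) (a b c : L),
    prd m a (prd n b c) - prd n b (prd m a c)
      = ∑ j ∈ Finset.range (m + 1), (Nat.choose m j : ℂ) • prd (m + n - j) (prd j a b) c

namespace LieConformalAlgebra

variable {L : Type} [AddCommGroup L] [Module ℂ L]

/-- The action of a polynomial `q(∂) ∈ ℂ[∂]` on an element. -/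
def applyP (C : LieConformalAlgebra L) (q : Polynomial ℂ) (x : L) : L :=
  q.sum fun k c => c • (⇑C.D)^[k] x

/-- `[a_λ b] = p(∂, λ) • t`, where `p ∈ ℂ[∂][λ]` is a two-variable polynomial
(outer variable `λ`, inner variable `∂`). -/
def BracketEq (C : LieConformalAlgebra L) (a b t : L) (p : Polynomial (Polynomial ℂ)) : Prop :=
  ∀ n : ℕ, C.prd n a b = (Nat.factorial n : ℂ) • C.applyP (p.coeff n) t

def IsSubalgebra (C : LieConformalAlgebra L) (N : Submodule ℂ L) : Prop :=
  (∀ x ∈ N, C.D x ∈ N) ∧ ∀ n : ℕ, ∀ a ∈ N, ∀ b ∈ N, C.prd n a b ∈ N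

def IsIdeal (C : LieConformalAlgebra L) (N : Submodule ℂ L) : Prop :=
  (∀ x ∈ N, C.D x ∈ N) ∧ ∀ (n : ℕ) (a : L), ∀ b ∈ N, C.prd n a b ∈ N

/-- `L` is finitely generated as a Lie conformal algebra (finite type). -/
def FiniteType (C : LieConformalAlgebra L) : Prop :=
  ∃ s : Finset L, ∀ N : Submodule ℂ L, C.IsSubalgebra N → (s : Set L) ⊆ (N : Set L) → N = ⊤

/-- `L` is finitely generated as a `ℂ[∂]`-module. -/
def FGPolyModule (C : LieConformalAlgebra L) : Prop :=
  ∃ s : Finset L, ∀ N : Submodule ℂ L, (∀ x ∈ N, C.D x ∈ N) → (s : Set L) ⊆ (N : Set L) → N = ⊤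

/-- Iterated adjoint action `a₁_(k₁)(a₂_(k₂)(⋯ x))`. -/
def iterPrd (C : LieConformalAlgebra L) : List (L × ℕ) → L → L
  | [], x => x
  | (a, k) :: t, x => C.prd k a (iterPrd C t x)

/-- The `ℂ[∂]`-rank of the submodule `N` is at most `r`:
any `r+1` elements of `N` are `ℂ[∂]`-linearly dependent. -/
def polyRankLE (C : LieConformalAlgebra L) (N : Submodule ℂ L) (r : ℕ) : Prop :=
  ∀ v : Fin (r + 1) → L, (∀ k, v k ∈ N) →
    ∃ q : Fin (r + 1) → Polynomial ℂ, (∃ k, q k ≠ 0) ∧ ∑ k, C.applyP (q k) (v k) = 0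

/-- The family `v` is a free `ℂ[∂]`-basis of `L`. -/
def IsFreePolyBasis (C : LieConformalAlgebra L) {ι : Type} (v : ι → L) : Prop :=
  LinearIndependent ℂ (fun q : ι × ℕ => (⇑C.D)^[q.2] (v q.1)) ∧
  Submodule.span ℂ (Set.range fun q : ι × ℕ => (⇑C.D)^[q.2] (v q.1)) = ⊤

/-- `[U_λ V]`: the `ℂ`-span of all `u_(n) v`. -/
def bspan (C : LieConformalAlgebra L) (U V : Set L) : Submodule ℂ L :=
  Submodule.span ℂ {x : L | ∃ (n : ℕ) (u : L) (w : L), u ∈ U ∧ w ∈ V ∧ x = C.prd n u w}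

end LieConformalAlgebra

/-- `∂` as an element of `ℂ[∂][λ]`. -/
def Pd : Polynomial (Polynomial ℂ) := Polynomial.C Polynomial.X
/-- `λ` as an element of `ℂ[∂][λ]`. -/
def Pl : Polynomial (Polynomial ℂ) := Polynomial.X
/-- a constant in `ℂ[∂][λ]`. -/
def Pc (a : ℂ) : Polynomial (Polynomial ℂ) := Polynomial.C (Polynomial.C a)

/-- Total degree of a two-variable polynomial in `ℂ[∂][λ]`. -/
def tdeg (p : Polynomial (Polynomial ℂ)) : ℕ :=
  p.support.sup fun n => n + (p.coeff n).natDegree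

section ModelPolynomials

/-- structure polynomials of `𝒱(s)` -/
def pV (s : ℂ) (i j : ℤ) : Polynomial (Polynomial ℂ) :=
  Pd + Pc 2 * Pl + Pc (s * ((i : ℂ) - (j : ℂ)))

/-- structure polynomials of `CL₁(s)` -/
def pCL1 (s : ℂ) (i j : ℤ) : Polynomial (Polynomial ℂ) :=
  Pc ((i : ℂ) + 1) * Pd + Pc ((i : ℂ) + (j : ℂ) + 2) * Pl + Pc (s * ((i : ℂ) - (j : ℂ)))

/-- structure polynomials of `CL₂(b,s)` -/
def pCL2 (b s : ℂ) (i j : ℤ) : Polynomial (Polynomial ℂ) :=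
  Pc ((i : ℂ) + b) * Pd + Pc ((i : ℂ) + (j : ℂ) + 2 * b) * Pl + Pc (s * ((i : ℂ) - (j : ℂ)))

/-- structure polynomials of `SCL₂(b,s)` (for `2b ∈ ℤ`), w.r.t. the basis
`L'ᵢ = Lᵢ (i ≠ -2b)`, `L'_{-2b} = (∂+2s)L_{-2b}` of the corresponding graded
subalgebra of `CL₂(b,s)`. -/
def pSCL2 (b s : ℂ) (i j : ℤ) : Polynomial (Polynomial ℂ) :=
  (if (i : ℂ) = -(2 * b) then Pc (2 * s) - Pl else 1) *
  (if (j : ℂ) = -(2 * b) then Pd + Pl + Pc (2 * s) else 1) *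
  (if (i : ℂ) + (j : ℂ) = -(2 * b) then Pc ((i : ℂ) + b) else pCL2 b s i j)

/-- structure polynomials of `CL₃(s)` -/
def pCL3 (s : ℂ) (i j : ℤ) : Polynomial (Polynomial ℂ) :=
  if i + j = 0 then Pc (i : ℂ) * (Pd + Pc s)
  else if i = 0 then Pc (-(j : ℂ)) * (Pc (2 * s) - Pl)
  else if j = 0 then Pc (i : ℂ) * (Pd + Pl + Pc (2 * s))
  else Pc (i : ℂ) * Pd + Pc ((i : ℂ) + (j : ℂ)) * Pl + Pc (s * ((i : ℂ) - (j : ℂ)))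

/-- structure polynomials of `ECL(s)` -/
def pECL (s : ℂ) (i j : ℤ) : Polynomial (Polynomial ℂ) :=
  if i + j = 0 then Pc (i : ℂ) * (Pd + Pc s) * (Pd + Pc (2 * s))
  else if i = 0 then Pc (-(j : ℂ))
  else if j = 0 then Pc (i : ℂ)
  else Pc (i : ℂ) * Pd + Pc ((i : ℂ) + (j : ℂ)) * Pl + Pc (s * ((i : ℂ) - (j : ℂ)))

/-- structure polynomials of `M(1)` (indices `≥ -1`, completed by skew-symmetry) -/
def pM1 (i j : ℤ) : Polynomial (Polynomial ℂ) :=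
  if i = 1 ∧ j = 1 then Pd + Pc 2 * Pl
  else if i = -1 ∧ 1 ≤ j then Pc (((j : ℂ) + 1) * ((j : ℂ) - 2) / 2)
  else if j = -1 ∧ 1 ≤ i then Pc (-(((i : ℂ) + 1) * ((i : ℂ) - 2) / 2))
  else if i = 0 then Pc (-(j : ℂ))
  else if j = 0 then Pc (i : ℂ)
  else if i = 1 ∧ 2 ≤ j then 1
  else if j = 1 ∧ 2 ≤ i then -1
  else 0

/-- structure polynomials of `M(2)` (completed by skew-symmetry) -/
def pM2 (i j : ℤ) : Polynomial (Polynomial ℂ) :=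
  if i = 1 ∧ j = 1 then Pd + Pc 2 * Pl
  else if i = -1 ∧ j = -1 then Pd + Pc 2 * Pl
  else if i = 0 then Pc (-(j : ℂ))
  else if j = 0 then Pc (i : ℂ)
  else if i = -1 ∧ 1 ≤ j then Pc (((j : ℂ) + 1) * ((j : ℂ) - 2) / 2)
  else if j = -1 ∧ 1 ≤ i then Pc (-(((i : ℂ) + 1) * ((i : ℂ) - 2) / 2))
  else if i = 1 ∧ j ≤ -2 then Pc (((j : ℂ) - 1) * ((j : ℂ) + 2) / 2)
  else if j = 1 ∧ i ≤ -2 then Pc (-(((i : ℂ) - 1) * ((i : ℂ) + 2) / 2))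
  else if i = -1 ∧ j ≤ -2 then 1
  else if j = -1 ∧ i ≤ -2 then -1
  else if i = 1 ∧ 2 ≤ j then 1
  else if j = 1 ∧ 2 ≤ i then -1
  else 0

end ModelPolynomials

namespace LieConformalAlgebra

variable {L : Type} [AddCommGroup L] [Module ℂ L]

/-- `C` is isomorphic to the Virasoro Lie conformal algebra. -/
def IsVir (C : LieConformalAlgebra L) : Prop :=
  ∃ e : L, C.IsFreePolyBasis (fun _ : Unit => e) ∧ C.BracketEq e e e (Pd + Pc 2 * Pl)

/-- `C` is isomorphic to the loop Virasoro Lie conformal algebra `𝒱(s)`. -/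
def IsV (C : LieConformalAlgebra L) (s : ℂ) : Prop :=
  ∃ v : ℤ → L, C.IsFreePolyBasis v ∧
    ∀ i j : ℤ, C.BracketEq (v i) (v j) (v (i + j)) (pV s i j)

/-- `C` is isomorphic to `CL₁(s)`. -/
def IsCL1 (C : LieConformalAlgebra L) (s : ℂ) : Prop :=
  ∃ v : ℤ → L, C.IsFreePolyBasis (fun q : {i : ℤ // -1 ≤ i} => v q.1) ∧
    ∀ i j : ℤ, -1 ≤ i → -1 ≤ j →
      C.BracketEq (v i) (v j) (if -1 ≤ i + j then v (i + j) else 0) (pCL1 s i j)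

/-- `C` is isomorphic to `CL₂(b,s)`. -/
def IsCL2 (C : LieConformalAlgebra L) (b s : ℂ) : Prop :=
  ∃ v : ℤ → L, C.IsFreePolyBasis v ∧
    ∀ i j : ℤ, C.BracketEq (v i) (v j) (v (i + j)) (pCL2 b s i j)

/-- `C` is isomorphic to `SCL₂(b,s)`. -/
def IsSCL2 (C : LieConformalAlgebra L) (b s : ℂ) : Prop :=
  ∃ v : ℤ → L, C.IsFreePolyBasis v ∧
    ∀ i j : ℤ, C.BracketEq (v i) (v j) (v (i + j)) (pSCL2 b s i j)

/-- `C` is isomorphic to `CL₃(s)`. -/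
def IsCL3 (C : LieConformalAlgebra L) (s : ℂ) : Prop :=
  ∃ v : ℤ → L, C.IsFreePolyBasis v ∧
    ∀ i j : ℤ, C.BracketEq (v i) (v j) (v (i + j)) (pCL3 s i j)

/-- `C` is isomorphic to `ECL(s)`. -/
def IsECL (C : LieConformalAlgebra L) (s : ℂ) : Prop :=
  ∃ v : ℤ → L, C.IsFreePolyBasis v ∧
    ∀ i j : ℤ, C.BracketEq (v i) (v j) (v (i + j)) (pECL s i j)

/-- `C` is isomorphic to `M(1)`. -/
def IsM1 (C : LieConformalAlgebra L) : Prop :=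
  ∃ v : ℤ → L, C.IsFreePolyBasis (fun q : {i : ℤ // -1 ≤ i} => v q.1) ∧
    ∀ i j : ℤ, -1 ≤ i → -1 ≤ j →
      C.BracketEq (v i) (v j) (if -1 ≤ i + j then v (i + j) else 0) (pM1 i j)

/-- `C` is isomorphic to `M(2)`. -/
def IsM2 (C : LieConformalAlgebra L) : Prop :=
  ∃ v : ℤ → L, C.IsFreePolyBasis v ∧
    ∀ i j : ℤ, C.BracketEq (v i) (v j) (v (i + j)) (pM2 i j)

/-- `C` is isomorphic to the current Lie conformal algebra `Cur 𝔤`. -/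
def IsCur (C : LieConformalAlgebra L) (g : Type) [LieRing g] [LieAlgebra ℂ g] : Prop :=
  ∃ φ : g →ₗ[ℂ] L,
    Function.Bijective (fun f : ℕ →₀ g => f.sum fun k x => (⇑C.D)^[k] (φ x)) ∧
    (∀ x y : g, C.prd 0 (φ x) (φ y) = φ ⁅x, y⁆) ∧
    ∀ n : ℕ, 1 ≤ n → ∀ x y : g, C.prd n (φ x) (φ y) = 0

/-- `C ≅ Cur sl(2,ℂ)`. -/
def IsCurSl2 (C : LieConformalAlgebra L) : Prop :=
  C.IsCur ↥(LieAlgebra.SpecialLinear.sl (Fin 2) ℂ)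

/-- `C ≅ Cur 𝒲`, `𝒲` the Witt algebra (basis `wᵢ`, `[wᵢ,wⱼ] = (j-i)w_{i+j}`). -/
def IsCurWitt (C : LieConformalAlgebra L) : Prop :=
  ∃ v : ℤ → L, C.IsFreePolyBasis v ∧
    (∀ i j : ℤ, C.prd 0 (v i) (v j) = (((j : ℂ) - (i : ℂ))) • v (i + j)) ∧
    ∀ n : ℕ, 1 ≤ n → ∀ i j : ℤ, C.prd n (v i) (v j) = 0

/-- `C ≅ Cur 𝒲₁`, `𝒲₁` spanned by the `wᵢ`, `i ≥ -1`. -/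
def IsCurWitt1 (C : LieConformalAlgebra L) : Prop :=
  ∃ v : ℤ → L, C.IsFreePolyBasis (fun q : {i : ℤ // -1 ≤ i} => v q.1) ∧
    (∀ i j : ℤ, -1 ≤ i → -1 ≤ j →
      C.prd 0 (v i) (v j) = (((j : ℂ) - (i : ℂ))) • (if -1 ≤ i + j then v (i + j) else 0)) ∧
    ∀ n : ℕ, 1 ≤ n → ∀ i j : ℤ, -1 ≤ i → -1 ≤ j → C.prd n (v i) (v j) = 0

end LieConformalAlgebra

/-- A `ℤ`-graded Lie conformal algebra. -/
structure GradedLCA (L : Type) [AddCommGroup L] [Module ℂ L]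
    extends LieConformalAlgebra L where
  G : ℤ → Submodule ℂ L
  internal : DirectSum.IsInternal G
  dGrade : ∀ i : ℤ, ∀ x ∈ G i, D x ∈ G i
  prdGrade : ∀ (i j : ℤ) (n : ℕ), ∀ a ∈ G i, ∀ b ∈ G j, prd n a b ∈ G (i + j)

namespace GradedLCA

variable {L : Type} [AddCommGroup L] [Module ℂ L]

/-- A graded ideal: an ideal generated by homogeneous elements. -/
def IsGradedIdeal (C : GradedLCA L) (N : Submodule ℂ L) : Prop :=
  C.toLieConformalAlgebra.IsIdeal N ∧ (⨆ i : ℤ, N ⊓ C.G i) = N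

/-- `L` is simple graded: nonzero bracket, and the only graded ideals are `⊥` and `⊤`. -/
def IsSimpleGraded (C : GradedLCA L) : Prop :=
  (∃ (n : ℕ) (a b : L), C.prd n a b ≠ 0) ∧
  ∀ N : Submodule ℂ L, C.IsGradedIdeal N → N = ⊥ ∨ N = ⊤

/-- `[L_λ L] = L`. -/
def Perfect (C : GradedLCA L) : Prop :=
  Submodule.span ℂ {x : L | ∃ (n : ℕ) (a b : L), x = C.prd n a b} = ⊤

/-- Each component `L_i` is a nilpotent `L₀`-module under the adjoint action. -/
def Rootless (C : GradedLCA L) : Prop :=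
  ∀ i : ℤ, ∃ n : ℕ, 1 ≤ n ∧ ∀ l : List (L × ℕ), l.length = n →
    (∀ q ∈ l, q.1 ∈ C.G 0) → ∀ x ∈ C.G i, C.toLieConformalAlgebra.iterPrd l x = 0

/-- The ranks of the components are uniformly bounded. -/
def UniformlyBounded (C : GradedLCA L) : Prop :=
  ∃ N : ℕ, 1 ≤ N ∧ ∀ i : ℤ, C.toLieConformalAlgebra.polyRankLE (C.G i) N

end GradedLCA

/-- A module over a Lie conformal algebra, encoded via the `n`-th actions. -/
structure LCAModule {L : Type} [AddCommGroup L] [Module ℂ L] (C : LieConformalAlgebra L)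
    (M : Type) [AddCommGroup M] [Module ℂ M] : Type where
  DM : M →ₗ[ℂ] M
  act : ℕ → L →ₗ[ℂ] M →ₗ[ℂ] M
  bound : ∀ (a : L) (m : M), ∃ N : ℕ, ∀ n : ℕ, N ≤ n → act n a m = 0
  sesq : ∀ (n : ℕ) (a : L) (m : M), act n (C.D a) m = (-(n : ℂ)) • act (n - 1) a m
  sesq' : ∀ (n : ℕ) (a : L) (m : M),
    act n a (DM m) = DM (act n a m) + (n : ℂ) • act (n - 1) a m
  comm : ∀ (p q : ℕ) (a b : L) (m : M),
    act p a (act q b m) - act q b (act p a m)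
      = ∑ j ∈ Finset.range (p + 1), (Nat.choose p j : ℂ) • act (p + q - j) (C.prd j a b) m

namespace LCAModule

variable {L : Type} [AddCommGroup L] [Module ℂ L] {C : LieConformalAlgebra L}
variable {M : Type} [AddCommGroup M] [Module ℂ M]

/-- Iterated action `a₁_(k₁)(a₂_(k₂)(⋯ m))`. -/
def iterAct (ρ : LCAModule C M) : List (L × ℕ) → M → M
  | [], m => m
  | (a, k) :: t, m => ρ.act k a (iterAct ρ t m)

/-- `N` is an `L`-submodule of `M`. -/
def IsSub (ρ : LCAModule C M) (N : Submodule ℂ M) : Prop :=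
  (∀ m ∈ N, ρ.DM m ∈ N) ∧ ∀ (n : ℕ) (a : L), ∀ m ∈ N, ρ.act n a m ∈ N

/-- `M` is a nilpotent module. -/
def Nilpotent (ρ : LCAModule C M) : Prop :=
  ∃ n : ℕ, 1 ≤ n ∧ ∀ l : List (L × ℕ), l.length = n → ∀ m : M, ρ.iterAct l m = 0

/-- `M` is finitely generated as an `L`-module. -/
def FG (ρ : LCAModule C M) : Prop :=
  ∃ s : Finset M, ∀ N : Submodule ℂ M, ρ.IsSub N → (s : Set M) ⊆ (N : Set M) → N = ⊤

/-- The `L`-submodule `N` is finitely generated as an `L`-module. -/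
def FGIn (ρ : LCAModule C M) (N : Submodule ℂ M) : Prop :=
  ∃ s : Finset M, (s : Set M) ⊆ (N : Set M) ∧
    ∀ P : Submodule ℂ M, ρ.IsSub P → (s : Set M) ⊆ (P : Set M) → N ≤ P

/-- `M` is finitely generated as a `ℂ[∂]`-module. -/
def FGPoly (ρ : LCAModule C M) : Prop :=
  ∃ s : Finset M, ∀ N : Submodule ℂ M, (∀ m ∈ N, ρ.DM m ∈ N) → (s : Set M) ⊆ (N : Set M) → N = ⊤

end LCAModule

/-- A family is `ℂ[∂]`-linearly independent. -/
def polyIndep {M : Type} [AddCommGroup M] [Module ℂ M] (DM : M →ₗ[ℂ] M)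
    {r : ℕ} (v : Fin r → M) : Prop :=
  ∀ q : Fin r → Polynomial ℂ,
    (∑ k, (q k).sum fun t c => c • (⇑DM)^[t] (v k)) = 0 → ∀ k, q k = 0

/-- The `ℂ[∂]`-rank of a submodule, in `ℕ∞`. -/
def polyRank {M : Type} [AddCommGroup M] [Module ℂ M] (DM : M →ₗ[ℂ] M)
    (N : Submodule ℂ M) : ℕ∞ :=
  ⨆ r ∈ {r : ℕ | ∃ v : Fin r → M, (∀ k, v k ∈ N) ∧ polyIndep DM v}, (r : ℕ∞)

/-- A graded module over a `ℤ`-graded Lie conformal algebra. -/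
structure GradedLCAModule {L : Type} [AddCommGroup L] [Module ℂ L] (C : GradedLCA L)
    (M : Type) [AddCommGroup M] [Module ℂ M]
    extends LCAModule C.toLieConformalAlgebra M where
  GM : ℤ → Submodule ℂ M
  internal : DirectSum.IsInternal GM
  dGrade : ∀ i : ℤ, ∀ m ∈ GM i, DM m ∈ GM i
  actGrade : ∀ (i j : ℤ) (n : ℕ), ∀ a ∈ C.G i, ∀ m ∈ GM j, act n a m ∈ GM (i + j)

namespace GradedLCAModule

variable {L : Type} [AddCommGroup L] [Module ℂ L] {C : GradedLCA L}
variable {M : Type} [AddCommGroup M] [Module ℂ M]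

/-- `Mⁿ = ⊕_{|i| ≤ n} M_i`. -/
def seg (ρ : GradedLCAModule C M) (n : ℕ) : Submodule ℂ M :=
  ⨆ i : ℤ, ⨆ _ : |i| ≤ (n : ℤ), ρ.GM i

/-- `e(M) = liminf (1/n) rank_{ℂ[∂]} Mⁿ`. -/
def eM (ρ : GradedLCAModule C M) : ℝ≥0∞ :=
  Filter.atTop.liminf fun n : ℕ => (polyRank ρ.DM (ρ.seg n) : ℝ≥0∞) / (n : ℝ≥0∞)

/-- Each `M_i` is a nilpotent `L₀`-module. -/
def Weightless (ρ : GradedLCAModule C M) : Prop :=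
  ∀ i : ℤ, ∃ n : ℕ, 1 ≤ n ∧ ∀ l : List (L × ℕ), l.length = n →
    (∀ q ∈ l, q.1 ∈ C.G 0) → ∀ m ∈ ρ.GM i, ρ.toLCAModule.iterAct l m = 0

/-- The submodule `I(M)` generated by all homogeneous `v` lying in the span of
the iterated actions of `L` on `v`. -/
def IM (ρ : GradedLCAModule C M) : Submodule ℂ M :=
  sInf {N : Submodule ℂ M | ρ.toLCAModule.IsSub N ∧
    {v : M | (∃ i : ℤ, v ∈ ρ.GM i) ∧
      v ∈ Submodule.span ℂ
        {w : M | ∃ l : List (L × ℕ), 1 ≤ l.length ∧ w = ρ.toLCAModule.iterAct l v}} ⊆ N}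

end GradedLCAModule

/-- The structure context for graded Lie conformal algebras all of whose
nonzero components are free of rank one over `ℂ[∂]`: fixed homogeneous bases
`bas i` and structure polynomials `sp i j ∈ ℂ[∂][λ]`, with `0 ∈ Supp(L)` and
`L₀` abelian. -/
structure RankOneContext (L : Type) [AddCommGroup L] [Module ℂ L]
    extends GradedLCA L where
  bas : ℤ → L
  sp : ℤ → ℤ → Polynomial (Polynomial ℂ)
  bas_mem : ∀ i : ℤ, bas i ∈ G i
  bas_zero : ∀ i : ℤ, G i = ⊥ → bas i = 0
  bas_indep : ∀ i : ℤ, G i ≠ ⊥ → LinearIndependent ℂ fun k : ℕ => (⇑D)^[k] (bas i)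
  bas_span : ∀ i : ℤ, G i ≠ ⊥ →
    G i = Submodule.span ℂ (Set.range fun k : ℕ => (⇑D)^[k] (bas i))
  sp_brkt : ∀ (i j : ℤ) (n : ℕ),
    prd n (bas i) (bas j)
      = (Nat.factorial n : ℂ) • (((sp i j).coeff n).sum fun k c => c • (⇑D)^[k] (bas (i + j)))
  sp_zero : ∀ i j : ℤ, (G i = ⊥ ∨ G j = ⊥ ∨ G (i + j) = ⊥) → sp i j = 0
  supp_zero : G 0 ≠ ⊥
  abelian0 : ∀ n : ℕ, ∀ x ∈ G 0, ∀ y ∈ G 0, prd n x y = 0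

/-- A Lie conformal algebra of class `𝒱`. -/
structure ClassV (L : Type) [AddCommGroup L] [Module ℂ L]
    extends RankOneContext L where
  supp_one : G 1 ≠ ⊥
  supp_negone : G (-1) ≠ ⊥
  genV : ∀ N : Submodule ℂ L, (∀ x ∈ N, D x ∈ N) →
    (∀ n : ℕ, ∀ a ∈ N, ∀ b ∈ N, prd n a b ∈ N) →
    G 1 ≤ N → G 0 ≤ N → G (-1) ≤ N → N = ⊤
  ne_m11 : sp (-1) 1 ≠ 0
  ne_01 : sp 0 1 ≠ 0

/-!
Write `[U_λ V] = 0` when all products of elements of `U` with elements of `V` vanish, and call a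
degree `i` active if `[L₀_λ L_i] ≠ 0`. If `i` is active while `j` and `i + j` are not, the Jacobi
identity shows that `[L₀_λ L_i]` centralizes `L_j`. As `L_i` has rank one and
`q(∂) x` centralizes no more than `x` does for `q ≠ 0`, all of `L_i` centralizes `L_j`. Hence the
components of active degree together with their mutual brackets span an ideal, which is all of `L`
by simplicity. An inactive component `L_k ≠ 0` is therefore hit by the bracket `[L_m_λ L_{k-m}]`
of two components of active degree.
-/

namespace LieConformalAlgebra

variable {L : Type} [AddCommGroup L] [Module ℂ L] (C : LieConformalAlgebra L)

lemma applyP_eq_aeval (q : ℂ[X]) (x : L) : C.applyP q x = aeval C.D q x := by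
  simp only [applyP, aeval_endomorphism, Module.End.pow_apply]

section SkewSymmetry

variable {C} {a b : L}

lemma prd_mem_of_swap {N : Submodule ℂ L} (hD : N ≤ N.comap C.D) (h : ∀ n, C.prd n b a ∈ N)
    (n : ℕ) : C.prd n a b ∈ N := by
  have hiter (j : ℕ) : Set.MapsTo (⇑C.D)^[j] N N := Set.MapsTo.iterate hD j
  rw [C.skew]
  exact N.neg_mem <| finsum_induction (· ∈ N) N.zero_mem (fun _ _ ↦ N.add_mem)
    fun j ↦ N.smul_mem _ (hiter j (h _))

lemma prd_eq_zero_of_swap (h : ∀ n, C.prd n b a = 0) (n : ℕ) : C.prd n a b = 0 :=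
  prd_mem_of_swap (N := ⊥) (by simp [SetLike.le_def]) h n

end SkewSymmetry

lemma prd_iterate_D_left (x y : L) (k n : ℕ) :
    C.prd n ((⇑C.D)^[k] x) y = ((-1 : ℂ) ^ k * n.descFactorial k) • C.prd (n - k) x y := by
  induction k generalizing n with
  | zero => simp
  | succ k ih =>
    rw [Function.iterate_succ_apply', C.sesq, ih, smul_smul]
    cases n with
    | zero => simp
    | succ n =>
      rw [Nat.add_sub_cancel, Nat.succ_descFactorial_succ, Nat.add_sub_add_right]
      congr 1
      push_cast
      ring

/-- The left centralizer of `U`: the elements `x` with `[x_λ y] = 0` for all `y ∈ U`. For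
`U = Set.univ` this is the centre. -/
def centralizer (U : Set L) : Submodule ℂ L where
  carrier := {x | ∀ n, ∀ y ∈ U, C.prd n x y = 0}
  zero_mem' n y _ := by simp
  add_mem' hx hx' n y hy := by simp [hx n y hy, hx' n y hy]
  smul_mem' c x hx n y hy := by simp [hx n y hy]

section Centralizer

variable {C} {U V : Set L} {a b x y z : L}

lemma subset_centralizer_comm : U ⊆ C.centralizer V ↔ V ⊆ C.centralizer U := by
  suffices h : ∀ {U V : Set L}, U ⊆ C.centralizer V → V ⊆ C.centralizer U from ⟨h, h⟩
  exact fun h v hv n u hu ↦ prd_eq_zero_of_swap (fun n ↦ h hu n v hv) n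

lemma bspan_eq_bot_iff : C.bspan U V = ⊥ ↔ U ⊆ C.centralizer V := by
  rw [bspan, Submodule.span_eq_bot]
  exact ⟨fun h u hu n v hv ↦ h _ ⟨n, u, v, hu, hv, rfl⟩,
    fun h _ ⟨n, _, v, hu, hv, hx⟩ ↦ hx ▸ h hu n v hv⟩

lemma bspan_eq_bot_comm : C.bspan U V = ⊥ ↔ C.bspan V U = ⊥ := by
  rw [bspan_eq_bot_iff, bspan_eq_bot_iff, subset_centralizer_comm]

lemma centralizer_le_comap_D : C.centralizer U ≤ (C.centralizer U).comap C.D :=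
  fun x hx n y hy ↦ by rw [C.sesq, hx _ y hy, smul_zero]

lemma aeval_mem_centralizer (q : ℂ[X]) (hx : x ∈ C.centralizer U) :
    aeval C.D q x ∈ C.centralizer U :=
  q.aeval_apply_smul_mem_of_le_comap hx C.D centralizer_le_comap_D

lemma prd_add_natDegree_aeval {n : ℕ} (h : ∀ m > n, C.prd m x y = 0) (q : ℂ[X]) :
    C.prd (n + q.natDegree) (aeval C.D q x) y =
      (q.leadingCoeff * ((-1) ^ q.natDegree * (n + q.natDegree).descFactorial q.natDegree)) •
        C.prd n x y := by
  rw [aeval_endomorphism, sum_over_range _ (by simp), map_sum, LinearMap.sum_apply,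
    Finset.sum_range_succ, Finset.sum_eq_zero, zero_add]
  · simp only [Module.End.pow_apply, map_smul, LinearMap.smul_apply, prd_iterate_D_left,
      Nat.add_sub_cancel, smul_smul, leadingCoeff]
  · intro k hk
    have hlt : n + q.natDegree - k > n := by have := Finset.mem_range.1 hk; omega
    simp [Module.End.pow_apply, prd_iterate_D_left, h _ hlt]

lemma mem_centralizer_of_aeval_mem {q : ℂ[X]} (hq : q ≠ 0)
    (h : aeval C.D q x ∈ C.centralizer U) : x ∈ C.centralizer U := by
  intro n y hy
  obtain ⟨N, hN⟩ := C.bound x y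
  refine Nat.strong_decreasing_induction ⟨N, fun m hm ↦ hN m hm.le⟩ (fun n ih ↦ ?_) n
  have hcoeff : q.leadingCoeff *
      ((-1) ^ q.natDegree * ((n + q.natDegree).descFactorial q.natDegree : ℂ)) ≠ 0 := by
    simp [hq, Nat.descFactorial_eq_zero_iff_lt]
  have hlead := prd_add_natDegree_aeval ih q
  rw [h _ y hy] at hlead
  exact (smul_eq_zero.1 hlead.symm).resolve_left hcoeff

lemma mem_centralizer_of_polyRankLE_one {N : Submodule ℂ L} (hN : C.polyRankLE N 1)
    (hx : x ∈ N) (hz : z ∈ N) (hzU : z ∈ C.centralizer U) (hz' : z ∉ C.centralizer Set.univ) :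
    x ∈ C.centralizer U := by
  obtain ⟨q, hq, hsum⟩ := hN ![x, z] (by simp [Fin.forall_fin_two, hx, hz])
  have hrel : aeval C.D (q 0) x + aeval C.D (q 1) z = 0 := by
    simpa [Fin.sum_univ_two, applyP_eq_aeval] using hsum
  have hq0 : q 0 ≠ 0 := by
    intro h0
    have h1 : q 1 ≠ 0 := by simpa [Fin.exists_fin_two, h0] using hq
    refine hz' (mem_centralizer_of_aeval_mem h1 ?_)
    rw [show aeval C.D (q 1) z = 0 by simpa [h0] using hrel]
    exact zero_mem _
  refine mem_centralizer_of_aeval_mem hq0 ?_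
  rw [eq_neg_of_add_eq_zero_left hrel]
  exact neg_mem (aeval_mem_centralizer _ hzU)

lemma prd_mem_centralizer (haU : a ∈ C.centralizer U) (haV : a ∈ C.centralizer V)
    (hb : ∀ n, Set.MapsTo (C.prd n b) U V) (m : ℕ) : C.prd m a b ∈ C.centralizer U := by
  induction m using Nat.strong_induction_on with
  | _ m ih =>
    intro n y hy
    have hjac := C.jacobi m n a b y
    rw [haV m _ (hb n hy), haU m y hy, map_zero, sub_zero, Finset.sum_range_succ,
      Finset.sum_eq_zero] at hjac
    · simpa using hjac.symm
    · exact fun j hj ↦ by rw [ih j (Finset.mem_range.1 hj) _ y hy, smul_zero]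

end Centralizer

section Ideal

variable {C} {U V : Set L}

lemma prd_mem_bspan {a b : L} (n : ℕ) (ha : a ∈ U) (hb : b ∈ V) : C.prd n a b ∈ C.bspan U V :=
  Submodule.subset_span ⟨n, a, b, ha, hb, rfl⟩

lemma bspan_le_comap_D (hD : Set.MapsTo C.D V V) : C.bspan U V ≤ (C.bspan U V).comap C.D := by
  refine Submodule.span_le.2 ?_
  rintro _ ⟨n, a, b, ha, hb, rfl⟩
  change C.D (C.prd n a b) ∈ C.bspan U V
  rw [← sub_eq_of_eq_add (C.sesq' n a b)]
  exact sub_mem (prd_mem_bspan n ha (hD hb)) (Submodule.smul_mem _ _ (prd_mem_bspan _ ha hb))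

lemma isIdeal_span_sup_bspan (hD : Set.MapsTo C.D U U)
    (hU : ∀ n, ∀ x ∈ U, ∀ y, C.prd n x y ∈ Submodule.span ℂ U ⊔ C.bspan U U) :
    C.IsIdeal (Submodule.span ℂ U ⊔ C.bspan U U) := by
  set N := Submodule.span ℂ U ⊔ C.bspan U U
  have hspan_D : Submodule.span ℂ U ≤ (Submodule.span ℂ U).comap C.D :=
    Submodule.span_le.2 fun x hx ↦ Submodule.subset_span (hD hx)
  have hND : N ≤ N.comap C.D :=
    sup_le (hspan_D.trans (Submodule.comap_mono le_sup_left))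
      ((bspan_le_comap_D hD).trans (Submodule.comap_mono le_sup_right))
  have hU' (n : ℕ) (y : L) {x : L} (hx : x ∈ U) : C.prd n y x ∈ N :=
    prd_mem_of_swap hND (fun n ↦ hU n x hx y) n
  refine ⟨hND, fun n y ↦ show N ≤ N.comap (C.prd n y) from
    sup_le (Submodule.span_le.2 fun x hx ↦ hU' n y hx) (Submodule.span_le.2 ?_)⟩
  rintro _ ⟨m, u, v, hu, hv, rfl⟩
  change C.prd n y (C.prd m u v) ∈ N
  rw [eq_add_of_sub_eq (C.jacobi n m y u v)]
  exact add_mem (sum_mem fun j _ ↦ Submodule.smul_mem _ _ (hU' _ _ hv)) (hU m u hu _)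

end Ideal

section Cyclic

variable {C} {b x : L}

lemma exists_aeval_eq_of_mem_span_iterate
    (hx : x ∈ Submodule.span ℂ (Set.range fun k ↦ (⇑C.D)^[k] b)) :
    ∃ p : ℂ[X], aeval C.D p b = x := by
  suffices h : Submodule.span ℂ (Set.range fun k ↦ (⇑C.D)^[k] b) ≤
      LinearMap.range ((aeval C.D).toLinearMap.flip b) from h hx
  rw [Submodule.span_le]
  rintro _ ⟨k, rfl⟩
  exact ⟨X ^ k, by simp [Module.End.pow_apply]⟩

lemma polyRankLE_one_of_le_span_iterate {N : Submodule ℂ L}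
    (hN : N ≤ Submodule.span ℂ (Set.range fun k ↦ (⇑C.D)^[k] b)) : C.polyRankLE N 1 := by
  intro v hv
  obtain ⟨p₀, h₀⟩ := exists_aeval_eq_of_mem_span_iterate (hN (hv 0))
  obtain ⟨p₁, h₁⟩ := exists_aeval_eq_of_mem_span_iterate (hN (hv 1))
  by_cases hp : p₁ = 0
  · exact ⟨![0, 1], ⟨1, by simp⟩, by simp [Fin.sum_univ_two, applyP_eq_aeval, ← h₁, hp]⟩
  · refine ⟨![p₁, -p₀], ⟨0, by simpa using hp⟩, ?_⟩
    have hcomm : aeval C.D p₁ (aeval C.D p₀ b) = aeval C.D p₀ (aeval C.D p₁ b) := by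
      rw [← Module.End.mul_apply, ← Module.End.mul_apply, ← map_mul, ← map_mul, mul_comm]
    simp [Fin.sum_univ_two, applyP_eq_aeval, ← h₀, ← h₁, hcomm]

lemma eq_zero_of_aeval_eq_zero (hb : LinearIndependent ℂ fun k ↦ (⇑C.D)^[k] b) {q : ℂ[X]}
    (h : aeval C.D q b = 0) : q = 0 := by
  simp only [aeval_endomorphism, sum_def, Module.End.pow_apply] at h
  ext k
  by_contra hk
  exact hk (linearIndependent_iff'.1 hb q.support q.coeff h k (mem_support_iff.2 hk))

end Cyclic

end LieConformalAlgebra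

namespace GradedLCA

open LieConformalAlgebra

variable {L : Type} [AddCommGroup L] [Module ℂ L] {C : GradedLCA L}

lemma iSup_G (C : GradedLCA L) : ⨆ i, C.G i = ⊤ := C.internal.submodule_iSup_eq_top

lemma bspan_G_le (C : GradedLCA L) (i j : ℤ) : C.bspan (C.G i) (C.G j) ≤ C.G (i + j) := by
  refine Submodule.span_le.2 ?_
  rintro _ ⟨n, x, y, hx, hy, rfl⟩
  exact C.prdGrade i j n x hx y hy

lemma G_inf_center_eq_bot (hs : C.IsSimpleGraded) (i : ℤ) :
    C.G i ⊓ C.centralizer Set.univ = ⊥ := by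
  have hideal : C.IsIdeal (C.G i ⊓ C.centralizer Set.univ) := by
    refine ⟨fun x hx ↦ ⟨C.dGrade i x hx.1, centralizer_le_comap_D hx.2⟩, fun n a b hb ↦ ?_⟩
    rw [prd_eq_zero_of_swap fun n ↦ hb.2 n a trivial]
    exact zero_mem _
  have hgraded : ⨆ j, (C.G i ⊓ C.centralizer Set.univ) ⊓ C.G j = C.G i ⊓ C.centralizer Set.univ :=
    le_antisymm (iSup_le fun _ ↦ inf_le_left) (le_iSup_of_le i (le_inf le_rfl inf_le_left))
  refine (hs.2 _ ⟨hideal, hgraded⟩).resolve_right fun htop ↦ ?_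
  obtain ⟨n, a, b, hab⟩ := hs.1
  have ha : a ∈ C.G i ⊓ C.centralizer Set.univ := htop ▸ trivial
  exact hab (ha.2 n b trivial)

variable (C) in
/-- The degrees `i` with `[L₀_λ L_i] ≠ 0`, which is the condition `p_{0,i} ≠ 0` stated without a
choice of basis. -/
def activeDegrees : Set ℤ := {i | C.bspan (C.G 0) (C.G i) ≠ ⊥}

variable (C) in
/-- The homogeneous elements whose degree is active. -/
def activeVectors : Set L := ⋃ i ∈ C.activeDegrees, C.G i

variable (C) in
/-- The span of the components of active degree and of the brackets between them. It is an ideal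
when `L` is simple graded with components of rank at most one. -/
def activeSpan : Submodule ℂ L :=
  Submodule.span ℂ C.activeVectors ⊔ C.bspan C.activeVectors C.activeVectors

lemma mem_activeVectors {x : L} : x ∈ C.activeVectors ↔ ∃ i ∈ C.activeDegrees, x ∈ C.G i := by
  simp [activeVectors]

lemma mapsTo_D_activeVectors : Set.MapsTo C.D C.activeVectors C.activeVectors := by
  intro x hx
  obtain ⟨i, hi, hxi⟩ := mem_activeVectors.1 hx
  exact mem_activeVectors.2 ⟨i, hi, C.dGrade i x hxi⟩

lemma G_le_activeSpan {i : ℤ} (hi : i ∈ C.activeDegrees) : C.G i ≤ C.activeSpan :=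
  fun _ hx ↦ Submodule.mem_sup_left (Submodule.subset_span (mem_activeVectors.2 ⟨i, hi, hx⟩))

lemma bspan_le_activeSpan {i j : ℤ} (hi : i ∈ C.activeDegrees) (hj : j ∈ C.activeDegrees) :
    C.bspan (C.G i) (C.G j) ≤ C.activeSpan := by
  refine Submodule.span_le.2 ?_
  rintro _ ⟨n, x, y, hx, hy, rfl⟩
  exact Submodule.mem_sup_right <|
    prd_mem_bspan n (mem_activeVectors.2 ⟨i, hi, hx⟩) (mem_activeVectors.2 ⟨j, hj, hy⟩)

lemma activeSpan_le {N : Submodule ℂ L} (hG : ∀ i ∈ C.activeDegrees, C.G i ≤ N)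
    (hbspan : ∀ i ∈ C.activeDegrees, ∀ j ∈ C.activeDegrees, C.bspan (C.G i) (C.G j) ≤ N) :
    C.activeSpan ≤ N := by
  refine sup_le (Submodule.span_le.2 fun x hx ↦ ?_) (Submodule.span_le.2 ?_)
  · obtain ⟨i, hi, hxi⟩ := mem_activeVectors.1 hx
    exact hG i hi hxi
  · rintro _ ⟨n, x, y, hx, hy, rfl⟩
    obtain ⟨i, hi, hxi⟩ := mem_activeVectors.1 hx
    obtain ⟨j, hj, hyj⟩ := mem_activeVectors.1 hy
    exact hbspan i hi j hj (prd_mem_bspan n hxi hyj)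

lemma iSup_activeSpan_inf_G (C : GradedLCA L) : ⨆ i, C.activeSpan ⊓ C.G i = C.activeSpan :=
  le_antisymm (iSup_le fun _ ↦ inf_le_left) <| activeSpan_le
    (fun i hi ↦ le_iSup_of_le i (le_inf (G_le_activeSpan hi) le_rfl))
    (fun i hi j hj ↦ le_iSup_of_le (i + j) (le_inf (bspan_le_activeSpan hi hj) (C.bspan_G_le i j)))

lemma bspan_eq_bot_of_active_of_inactive (hs : C.IsSimpleGraded) {i j : ℤ}
    (hrank : C.polyRankLE (C.G i) 1) (hi : i ∈ C.activeDegrees) (hj : j ∉ C.activeDegrees)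
    (hij : i + j ∉ C.activeDegrees) : C.bspan (C.G i) (C.G j) = ⊥ := by
  obtain ⟨m, a, ha, b, hb, hz⟩ : ∃ m, ∃ a ∈ C.G 0, ∃ b ∈ C.G i, C.prd m a b ≠ 0 := by
    by_contra! h
    exact hi (bspan_eq_bot_iff.2 fun a ha m b hb ↦ h m a ha b hb)
  have hzi : C.prd m a b ∈ C.G i := by simpa using C.prdGrade 0 i m a ha b hb
  have hz_center : C.prd m a b ∉ C.centralizer Set.univ := fun h ↦
    hz ((Submodule.mem_bot ℂ).1 (G_inf_center_eq_bot hs i ▸ ⟨hzi, h⟩))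
  have hinactive {l : ℤ} (hl : l ∉ C.activeDegrees) : a ∈ C.centralizer (C.G l) :=
    bspan_eq_bot_iff.1 (not_not.1 hl) ha
  have hzj : C.prd m a b ∈ C.centralizer (C.G j) :=
    prd_mem_centralizer (hinactive hj) (hinactive hij) (fun n y hy ↦ C.prdGrade i j n b hb y hy) m
  exact bspan_eq_bot_iff.2 fun x hx ↦ mem_centralizer_of_polyRankLE_one hrank hx hzi hzj hz_center

lemma prd_mem_activeSpan (hs : C.IsSimpleGraded) (hrank : ∀ i, C.polyRankLE (C.G i) 1) (n : ℕ)
    {x : L} (hx : x ∈ C.activeVectors) (y : L) : C.prd n x y ∈ C.activeSpan := by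
  obtain ⟨i, hi, hxi⟩ := mem_activeVectors.1 hx
  suffices h : ⨆ j, C.G j ≤ C.activeSpan.comap (C.prd n x) from h (C.iSup_G ▸ trivial)
  refine iSup_le fun j y hy ↦ ?_
  by_cases hij : i + j ∈ C.activeDegrees
  · exact G_le_activeSpan hij (C.prdGrade i j n x hxi y hy)
  by_cases hj : j ∈ C.activeDegrees
  · exact bspan_le_activeSpan hi hj (prd_mem_bspan n hxi hy)
  · have hzero := bspan_eq_bot_iff.1 (bspan_eq_bot_of_active_of_inactive hs (hrank i) hi hj hij)
    simp [hzero hxi n y hy]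

lemma isGradedIdeal_activeSpan (hs : C.IsSimpleGraded) (hrank : ∀ i, C.polyRankLE (C.G i) 1) :
    C.IsGradedIdeal C.activeSpan :=
  ⟨isIdeal_span_sup_bspan mapsTo_D_activeVectors fun n _ hx ↦ prd_mem_activeSpan hs hrank n hx,
    C.iSup_activeSpan_inf_G⟩

lemma activeDegrees_nonempty (hs : C.IsSimpleGraded) (h0 : C.G 0 ≠ ⊥) :
    C.activeDegrees.Nonempty := by
  by_contra! hempty
  have hbracket (i : ℤ) : C.bspan (C.G 0) (C.G i) = ⊥ :=
    not_not.1 fun hi ↦ (hempty ▸ hi : i ∈ (∅ : Set ℤ))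
  have hcenter : C.G 0 ≤ C.centralizer Set.univ := by
    intro x hx n y _
    have hker : ⨆ i, C.G i ≤ LinearMap.ker (C.prd n x) :=
      iSup_le fun i y hy ↦ bspan_eq_bot_iff.1 (hbracket i) hx n y hy
    exact hker (C.iSup_G ▸ trivial)
  exact h0 (inf_eq_left.2 hcenter ▸ G_inf_center_eq_bot hs 0)

lemma activeSpan_eq_top (hs : C.IsSimpleGraded) (hrank : ∀ i, C.polyRankLE (C.G i) 1)
    (h0 : C.G 0 ≠ ⊥) : C.activeSpan = ⊤ := by
  refine (hs.2 _ (isGradedIdeal_activeSpan hs hrank)).resolve_left fun hbot ↦ ?_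
  obtain ⟨i, hi⟩ := activeDegrees_nonempty hs h0
  have hGi : C.G i ≤ ⊥ := hbot ▸ G_le_activeSpan hi
  exact hi (bspan_eq_bot_comm.1 (bspan_eq_bot_iff.2 (hGi.trans bot_le)))

end GradedLCA

theorem exists_nonvanishing_p0m_general {L : Type} [AddCommGroup L] [Module ℂ L]
    {C : GradedLCA L} (hs : C.IsSimpleGraded) (hrank : ∀ i, C.polyRankLE (C.G i) 1)
    (h0 : C.G 0 ≠ ⊥) {k : ℤ} (hk : C.G k ≠ ⊥) (h0k : C.bspan (C.G 0) (C.G k) = ⊥) :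
    ∃ m, C.bspan (C.G 0) (C.G m) ≠ ⊥ ∧ C.bspan (C.G m) (C.G (k - m)) ≠ ⊥ := by
  by_contra! hcon
  have hG {i : ℤ} (hik : i ≠ k) : C.G i ≤ ⨆ i, ⨆ _ : i ≠ k, C.G i := le_iSup₂_of_le i hik le_rfl
  have hle : C.activeSpan ≤ ⨆ i, ⨆ _ : i ≠ k, C.G i := by
    refine GradedLCA.activeSpan_le (fun i hi ↦ hG fun hik ↦ hi (hik ▸ h0k)) fun i hi j _ ↦ ?_
    by_cases hij : i + j = k
    · rw [eq_sub_of_add_eq' hij, hcon i hi]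
      exact bot_le
    · exact (C.bspan_G_le i j).trans (hG hij)
  rw [GradedLCA.activeSpan_eq_top hs hrank h0, top_le_iff] at hle
  exact C.internal.submodule_iSupIndep.mem_of_biSup_eq_top (s := {i | i ≠ k}) hle hk rfl

namespace RankOneContext

open LieConformalAlgebra

variable {L : Type} [AddCommGroup L] [Module ℂ L] {C : RankOneContext L}

lemma G_le_span_iterate (C : RankOneContext L) (i : ℤ) :
    C.G i ≤ Submodule.span ℂ (Set.range fun k ↦ (⇑C.D)^[k] (C.bas i)) := by
  by_cases hi : C.G i = ⊥
  · simp [hi]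
  · exact (C.bas_span i hi).le

lemma G_le_of_bas_mem {i : ℤ} {N : Submodule ℂ L} (hD : N ≤ N.comap C.D) (hb : C.bas i ∈ N) :
    C.G i ≤ N := by
  refine (C.G_le_span_iterate i).trans (Submodule.span_le.2 ?_)
  rintro _ ⟨k, rfl⟩
  exact Set.MapsTo.iterate hD k hb

lemma polyRankLE_one (C : RankOneContext L) (i : ℤ) : C.polyRankLE (C.G i) 1 :=
  polyRankLE_one_of_le_span_iterate (C.G_le_span_iterate i)

lemma prd_bas_bas (C : RankOneContext L) (i j : ℤ) (n : ℕ) :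
    C.prd n (C.bas i) (C.bas j) =
      (n.factorial : ℂ) • aeval C.D ((C.sp i j).coeff n) (C.bas (i + j)) := by
  rw [C.sp_brkt, ← applyP_eq_aeval, applyP]

lemma bspan_eq_bot_of_bas {i j : ℤ} (h : ∀ n, C.prd n (C.bas i) (C.bas j) = 0) :
    C.bspan (C.G i) (C.G j) = ⊥ := by
  have hi : C.G i ≤ C.centralizer {C.bas j} :=
    G_le_of_bas_mem centralizer_le_comap_D fun n _ hy ↦ hy ▸ h n
  have hj : C.G j ≤ C.centralizer (C.G i) :=
    G_le_of_bas_mem centralizer_le_comap_D (subset_centralizer_comm.1 hi rfl)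
  exact bspan_eq_bot_comm.1 (bspan_eq_bot_iff.2 hj)

lemma sp_eq_zero_iff {i j : ℤ} : C.sp i j = 0 ↔ C.bspan (C.G i) (C.G j) = ⊥ := by
  refine ⟨fun h ↦ bspan_eq_bot_of_bas fun n ↦ by simp [prd_bas_bas, h], fun h ↦ ?_⟩
  by_cases hij : C.G (i + j) = ⊥
  · exact C.sp_zero i j (Or.inr (Or.inr hij))
  ext1 n
  have hprd := C.prd_bas_bas i j n
  rw [bspan_eq_bot_iff.1 h (C.bas_mem i) n _ (C.bas_mem j)] at hprd
  exact eq_zero_of_aeval_eq_zero (C.bas_indep _ hij)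
    ((smul_eq_zero.1 hprd.symm).resolve_left (Nat.cast_ne_zero.2 n.factorial_ne_zero))

lemma sp_zero_zero (C : RankOneContext L) : C.sp 0 0 = 0 :=
  sp_eq_zero_iff.2 (bspan_eq_bot_iff.2 fun x hx n y hy ↦ C.abelian0 n x hx y hy)

lemma sp_eq_zero_comm {i j : ℤ} : C.sp i j = 0 ↔ C.sp j i = 0 := by
  rw [sp_eq_zero_iff, sp_eq_zero_iff, bspan_eq_bot_comm]

lemma G_ne_bot_of_sp_ne_zero {i j : ℤ} (h : C.sp i j ≠ 0) : C.G j ≠ ⊥ :=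
  fun hj ↦ h (C.sp_zero i j (Or.inr (Or.inl hj)))

lemma exists_sp_ne_zero (hs : C.IsSimpleGraded) {k : ℤ} (hk : C.G k ≠ ⊥) (h0k : C.sp 0 k = 0) :
    ∃ m, C.G m ≠ ⊥ ∧ C.sp 0 m ≠ 0 ∧ C.sp m (k - m) ≠ 0 := by
  obtain ⟨m, h0m, hm⟩ := exists_nonvanishing_p0m_general hs C.polyRankLE_one C.supp_zero hk
    (sp_eq_zero_iff.1 h0k)
  rw [Ne, ← sp_eq_zero_iff] at h0m hm
  exact ⟨m, G_ne_bot_of_sp_ne_zero h0m, h0m, hm⟩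

lemma exists_sp_neg_self_ne_zero (hs : C.IsSimpleGraded) :
    ∃ j, C.G j ≠ ⊥ ∧ C.sp (-j) j ≠ 0 ∧ C.sp 0 j ≠ 0 := by
  obtain ⟨j, hj, h0j, hneg⟩ := exists_sp_ne_zero hs C.supp_zero C.sp_zero_zero
  rw [zero_sub, Ne, sp_eq_zero_comm] at hneg
  exact ⟨j, hj, hneg, h0j⟩

end RankOneContext

/-- if `L` is simple graded and `k ∈ Supp(L)` has `p_{0,k} = 0`,
then some `m ∈ Supp(L)` has `p_{0,m} ≠ 0` and `p_{m,k-m} ≠ 0`; in particular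
`Supp₁(L) ≠ ∅`. -/
theorem exists_nonvanishing_p0m
    {L : Type} [AddCommGroup L] [Module ℂ L] (C : RankOneContext L)
    (hs : C.toGradedLCA.IsSimpleGraded)
    (k : ℤ) (hk : C.G k ≠ ⊥) (h0k : C.sp 0 k = 0) :
    (∃ m : ℤ, C.G m ≠ ⊥ ∧ C.sp 0 m ≠ 0 ∧ C.sp m (k - m) ≠ 0) ∧
    (∃ j : ℤ, C.G j ≠ ⊥ ∧ C.sp (-j) j ≠ 0 ∧ C.sp 0 j ≠ 0) :=
  ⟨RankOneContext.exists_sp_ne_zero hs hk h0k, RankOneContext.exists_sp_neg_self_ne_zero hs⟩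
end
end

section
/- Let L be a ℤ-graded Lie conformal algebra as in the structure context (every nonzero component free of rank one over ℂ[∂], 0 ∈ Supp(L), L₀ abelian), and suppose k ∈ Supp₁(L). Then: (1) −k ∈ Supp₁(L); (2) p_{−k,k}(∂,λ) ∈ ℂ[∂], i.e. p_{−k,k} does not involve λ; (3) deg p_{−k,k}(∂) + deg p_{0,k}(λ) ≤ 2. -/
open scoped BigOperators Classical ENNReal
open Polynomial

noncomputable section

/-!
The Jacobi identity for `L₀, L₀, Lᵢ` says that `p_{0,i}(∂ + λ, μ) p_{0,i}(∂, λ)` is symmetric in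
`λ` and `μ`; comparing the sums of the roots in `∂` for `μ = -λ` shows that `p_{0,i}` does not
involve `∂`. The Jacobi identity for `L₀, L₋ₖ, Lₖ` then reads
`-p_{0,k}(λ) p_{-k,k}(∂, μ) = p_{0,-k}(λ) p_{-k,k}(∂, λ + μ)`: leading coefficients in `μ` give
`p_{0,-k} = -p_{0,k}`, and so `p_{-k,k}` is invariant under shifts of its second variable.
Finally, put `h(x) = p_{-k,k}(-x) p_{0,k}(x)`. The Jacobi identity for `L₋ₖ, Lₖ, Lₖ` at `∂ = -λ`
becomes `h(λ + μ) - h(λ - μ) = q(μ) r(λ)`, which is impossible if `deg h ≥ 3`, because the first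
and third Hasse derivatives of `h` would be proportional.
-/

section Polynomials

theorem finite_eval_C_eq_zero {R : Type*} [CommRing R] [IsDomain R] {p : R[X][X]}
    (hp : p ≠ 0) : {x : R | p.eval (C x) = 0}.Finite :=
  (finite_setOfPred_isRoot hp).preimage C_injective.injOn

theorem eq_of_infinite_eval_C_eq {R : Type*} [CommRing R] [IsDomain R] {p q : R[X][X]}
    {S : Set R} (hS : S.Infinite) (h : ∀ x ∈ S, p.eval (C x) = q.eval (C x)) : p = q := by
  by_contra hpq
  refine hS ((finite_eval_C_eq_zero (sub_ne_zero.2 hpq)).subset fun x hx => ?_)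
  simpa only [Set.mem_ofPred_eq, eval_sub, sub_eq_zero] using h x hx

theorem eval_C_map_evalRingHom {R : Type*} [CommSemiring R] (p : R[X][X]) (a x : R) :
    (p.map (evalRingHom a)).eval x = (p.eval (C x)).eval a := by
  simpa [eval_map] using eval₂_at_apply (p := p) (evalRingHom a) (C x)

theorem eval_C_map_C {R : Type*} [CommSemiring R] (p : R[X]) (x : R) :
    (p.map C).eval (C x) = C (p.eval x) := by
  rw [eval_map, eval₂_at_apply]

-- Comparing the sums of the roots of both sides.
theorem natDegree_mul_eq_of_comp_X_add_C_mul_eq {K : Type*} [Field K] [IsAlgClosed K]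
    {p q : K[X]} (hp : p ≠ 0) (hq : q ≠ 0) {a b : K}
    (h : p.comp (X + C a) * q = q.comp (X + C b) * p) :
    p.natDegree * a = q.natDegree * b := by
  have roots_shift (r : K[X]) (c : K) : (r.comp (X + C c)).roots = r.roots.map (· - c) := by
    simpa using roots_comp_C_mul_X_add_C r 1 c isUnit_one
  have hsum := congrArg (fun r : K[X] => r.roots.sum) h
  simp only [roots_mul (mul_ne_zero (comp_X_add_C_ne_zero_iff.2 hp) hq),
    roots_mul (mul_ne_zero (comp_X_add_C_ne_zero_iff.2 hq) hp), roots_shift, Multiset.sum_add,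
    Multiset.sum_map_sub, Multiset.map_const', Multiset.sum_replicate, Multiset.map_id',
    IsAlgClosed.card_roots_eq_natDegree, nsmul_eq_mul] at hsum
  linear_combination -hsum

theorem eq_map_C_of_eval_comp_mul_symm {K : Type*} [Field K] [IsAlgClosed K] [CharZero K]
    {p : K[X][X]}
    (h : ∀ a b : K, (p.eval (C b)).comp (X + C a) * p.eval (C a)
      = (p.eval (C a)).comp (X + C b) * p.eval (C b)) :
    p = (p.map (evalRingHom 0)).map C := by
  rcases eq_or_ne p 0 with rfl | hp
  · simp
  set Z : Set K := {a | p.eval (C a) = 0}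
  have hZ : Z.Finite := finite_eval_C_eq_zero hp
  have hS : ({0} ∪ Z ∪ Neg.neg ⁻¹' Z)ᶜ.Infinite :=
    (((Set.finite_singleton 0).union hZ).union (hZ.preimage neg_injective.injOn)).infinite_compl
  refine eq_of_infinite_eval_C_eq hS fun a ha => ?_
  simp only [Set.mem_compl_iff, Set.mem_union, Set.mem_singleton_iff, not_or] at ha
  obtain ⟨⟨ha0, haZ⟩, hnaZ⟩ := ha
  -- For `b = -a` the degrees in `∂` of both values add up to zero.
  have hdeg := natDegree_mul_eq_of_comp_X_add_C_mul_eq haZ hnaZ (h (-a) a)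
  have hsum : ((p.eval (C a)).natDegree + (p.eval (C (-a))).natDegree : K) = 0 := by
    refine (mul_eq_zero.1 ?_).resolve_right ha0
    linear_combination -hdeg
  have hconst : (p.eval (C a)).natDegree = 0 := by
    have : (p.eval (C a)).natDegree + (p.eval (C (-a))).natDegree = 0 := by exact_mod_cast hsum
    omega
  rw [eval_C_map_C, eval_C_map_evalRingHom, ← coeff_zero_eq_eval_zero]
  exact eq_C_of_natDegree_eq_zero hconst

theorem natDegree_eq_zero_of_comp_X_add_C_eq {R : Type*} [CommRing R] [IsDomain R] [CharZero R]
    {p : R[X]} {a : R} (ha : a ≠ 0) (h : p.comp (X + C a) = p) : p.natDegree = 0 := by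
  have hperiod (n : ℕ) : p.eval (n * a) = p.eval 0 := by
    induction n with
    | zero => simp
    | succ n ih =>
      rw [← ih]
      nth_rewrite 2 [← h]
      simp [add_mul]
  have hconst : p = C (p.eval 0) := by
    refine eq_of_infinite_eval_eq _ _ ((Set.infinite_range_of_injective (f := fun n : ℕ => n * a)
      fun m n hmn => ?_).mono ?_)
    · exact_mod_cast mul_right_cancel₀ ha hmn
    · rintro _ ⟨n, rfl⟩
      simpa using hperiod n
  rw [hconst, natDegree_C]

theorem eq_of_C_mul_eq_C_mul_comp_X_add_C {R : Type*} [CommRing R] [IsDomain R] {p : R[X]}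
    (hp : p ≠ 0) {a c d : R} (h : C c * p = C d * p.comp (X + C a)) : c = d := by
  have hlead := congrArg leadingCoeff h
  rw [leadingCoeff_mul, leadingCoeff_mul, leadingCoeff_C, leadingCoeff_C, ← taylor_apply,
    leadingCoeff_taylor] at hlead
  exact mul_right_cancel₀ (leadingCoeff_ne_zero.2 hp) hlead

theorem coeff_taylor_sub_taylor_comp_neg_X {R : Type*} [CommRing R] (p : R[X]) (a : R) {n : ℕ}
    (hn : Odd n) :
    (taylor a p - (taylor a p).comp (-X)).coeff n = 2 * (hasseDeriv n p).eval a := by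
  have hneg : (-X : R[X]) = C (-1) * X := by simp
  rw [coeff_sub, hneg, comp_C_mul_X_coeff, taylor_coeff, hn.neg_one_pow]
  ring

theorem hasseDeriv_ne_zero {R : Type*} [CommRing R] [IsDomain R] [CharZero R] {p : R[X]} {n : ℕ}
    (hp : p ≠ 0) (hn : n ≤ p.natDegree) : hasseDeriv n p ≠ 0 := by
  intro hzero
  have hcoeff := hasseDeriv_coeff n p (p.natDegree - n)
  rw [hzero, coeff_zero, Nat.sub_add_cancel hn, coeff_natDegree] at hcoeff
  refine mul_ne_zero ?_ (leadingCoeff_ne_zero.2 hp) hcoeff.symm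
  exact_mod_cast (Nat.choose_pos hn).ne'

-- The odd Taylor coefficients of `h` at `a` are the constant multiples `q.coeff n` of `r a / 2`,
-- so the Hasse derivatives of orders one and three are proportional although their degrees differ.
theorem natDegree_le_two_of_eval_add_sub_eval_sub {R : Type*} [CommRing R] [IsDomain R]
    [CharZero R] {h q : R[X]} {r : R → R}
    (H : ∀ a b : R, h.eval (a + b) - h.eval (a - b) = q.eval b * r a) : h.natDegree ≤ 2 := by
  have hodd (a : R) {n : ℕ} (hn : Odd n) : 2 * (hasseDeriv n h).eval a = r a * q.coeff n := by
    rw [← coeff_taylor_sub_taylor_comp_neg_X h a hn, ← coeff_C_mul]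
    congr 1
    refine Polynomial.funext fun b => ?_
    simp only [eval_sub, taylor_eval, eval_comp, eval_neg, eval_X, eval_mul, eval_C]
    rw [mul_comm (r a), ← H, add_comm b, neg_add_eq_sub]
  have hprop : C (q.coeff 1) * hasseDeriv 3 h = C (q.coeff 3) * hasseDeriv 1 h := by
    refine Polynomial.funext fun a => mul_left_cancel₀ (two_ne_zero (α := R)) ?_
    simp only [eval_mul, eval_C]
    linear_combination q.coeff 1 * hodd a (n := 3) (by decide)
      - q.coeff 3 * hodd a (n := 1) (by decide)
  by_contra! hdeg
  have hderiv {n : ℕ} (hn : n ≤ 3) : hasseDeriv n h ≠ 0 :=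
    hasseDeriv_ne_zero (ne_zero_of_natDegree_gt hdeg) (hn.trans hdeg)
  have hq₁ : q.coeff 1 ≠ 0 := by
    intro hq
    refine hderiv (n := 1) (by decide) (Polynomial.funext fun a => ?_)
    simpa [hq] using hodd a (n := 1) (by decide)
  have hq₃ : q.coeff 3 ≠ 0 := by
    intro hq
    simp [hq, hq₁, hderiv] at hprop
  have hdegrees := congrArg natDegree hprop
  rw [natDegree_C_mul hq₁, natDegree_C_mul hq₃] at hdegrees
  have h₁ := natDegree_hasseDeriv h 1
  have h₃ := natDegree_hasseDeriv h 3
  omega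

theorem tdeg_C (p : ℂ[X]) : tdeg (C p) = p.natDegree := by
  rcases eq_or_ne p 0 with rfl | hp
  · simp [tdeg]
  · simp [tdeg, support_C hp]

theorem tdeg_map_C (p : ℂ[X]) : tdeg (p.map C) = p.natDegree := by
  rcases eq_or_ne p 0 with rfl | hp
  · simp [tdeg]
  · simp only [tdeg, support_map_of_injective p C_injective, coeff_map, natDegree_C, add_zero]
    rw [natDegree_eq_support_max' hp, Finset.max'_eq_sup', Finset.sup'_eq_sup]
    rfl

end Polynomials

section FiniteSums

open Filter Finset

theorem sum_range_sum_antidiagonal {V : Type*} [AddCommMonoid V] {M : ℕ} {f : ℕ → ℕ → V}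
    (hf : ∀ i j, M ≤ i + j → f i j = 0) :
    ∑ n ∈ range M, ∑ p ∈ antidiagonal n, f p.1 p.2 = ∑ i ∈ range M, ∑ j ∈ range M, f i j := by
  simp only [Finset.Nat.sum_antidiagonal_eq_sum_range_succ f, sum_range_diag_flip]
  refine sum_congr rfl fun i _ =>
    sum_subset (range_subset_range.2 (Nat.sub_le M i)) fun j _ hj => ?_
  rw [mem_range, not_lt] at hj
  exact hf i j (by omega)

theorem sum_range_add_pow_smul {S V : Type*} [Semiring S] [AddCommMonoid V] [Module S V] {x y : S}
    (hxy : Commute x y) {M : ℕ} {v : ℕ → V} (hv : ∀ n, M ≤ n → v n = 0) :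
    ∑ n ∈ range M, (x + y) ^ n • v n
      = ∑ i ∈ range M, ∑ j ∈ range M, ((i + j).choose i • (x ^ i * y ^ j)) • v (i + j) := by
  rw [← sum_range_sum_antidiagonal fun i j hij => by rw [hv _ hij, smul_zero]]
  refine sum_congr rfl fun n _ => ?_
  rw [hxy.add_pow', sum_smul]
  refine sum_congr rfl fun p hp => ?_
  rw [mem_antidiagonal.1 hp]

theorem eventually_finsum_eq_sum_range {V : Type*} [AddCommMonoid V] {v : ℕ → V}
    (hv : ∀ᶠ n in atTop, v n = 0) : ∀ᶠ M in atTop, ∑ᶠ n, v n = ∑ n ∈ range M, v n := by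
  obtain ⟨N, hN⟩ := eventually_atTop.1 hv
  filter_upwards [eventually_ge_atTop N] with M hM
  refine finsum_eq_sum_of_support_subset _ fun n hn => ?_
  rw [coe_range, Set.mem_Iio]
  by_contra! hMn
  exact hn (hN n (hM.trans hMn))

variable {R V W : Type*} [CommRing R] [AddCommGroup V] [Module R V] [AddCommGroup W] [Module R W]
  {T : ℕ → V →ₗ[R] W} {v : ℕ → V}

theorem eventually_forall_add_le_apply_eq_zero (hT : ∀ x, ∀ᶠ n in atTop, T n x = 0)
    (hv : ∀ᶠ n in atTop, v n = 0) : ∀ᶠ M in atTop, ∀ i j, M ≤ i + j → T i (v j) = 0 := by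
  obtain ⟨N, hN⟩ := eventually_atTop.1 hv
  choose B hB using fun j => eventually_atTop.1 (hT (v j))
  filter_upwards [eventually_ge_atTop (N + (range N).sup B)] with M hM i j hij
  rcases le_or_gt N j with hj | hj
  · rw [hN j hj, map_zero]
  · have := le_sup (f := B) (mem_range.2 hj)
    exact hB j i (by omega)

theorem eventually_finsum_smul_apply_finsum_smul (hT : ∀ x, ∀ᶠ n in atTop, T n x = 0)
    (hv : ∀ᶠ n in atTop, v n = 0) (l m : R) :
    ∀ᶠ M in atTop, ∑ᶠ i, l ^ i • T i (∑ᶠ j, m ^ j • v j)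
      = ∑ i ∈ range M, ∑ j ∈ range M, (l ^ i * m ^ j) • T i (v j) := by
  have hinner : ∀ᶠ j in atTop, m ^ j • v j = 0 := hv.mono fun j hj => by rw [hj, smul_zero]
  have houter (x : V) : ∀ᶠ i in atTop, l ^ i • T i x = 0 :=
    (hT x).mono fun i hi => by rw [hi, smul_zero]
  filter_upwards [eventually_finsum_eq_sum_range hinner, eventually_finsum_eq_sum_range (houter _)]
    with M hinnerM houterM
  rw [houterM, hinnerM]
  simp only [map_sum, map_smul, smul_sum, smul_smul]

end FiniteSums

theorem inv_factorial_succ_mul (n : ℕ) :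
    (Nat.factorial (n + 1) : ℂ)⁻¹ * (n + 1 : ℕ) = (Nat.factorial n : ℂ)⁻¹ := by
  have hn : ((n + 1 : ℕ) : ℂ) ≠ 0 := Nat.cast_ne_zero.2 n.succ_ne_zero
  rw [Nat.factorial_succ, Nat.cast_mul, mul_inv_rev, inv_mul_cancel_right₀ hn]

theorem choose_mul_inv_factorial (i j : ℕ) :
    ((i + j).choose i : ℂ) * (Nat.factorial (i + j) : ℂ)⁻¹
      = (Nat.factorial i : ℂ)⁻¹ * (Nat.factorial j : ℂ)⁻¹ := by
  rw [Nat.cast_add_choose, div_mul_eq_mul_div,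
    mul_inv_cancel₀ (Nat.cast_ne_zero.2 (i + j).factorial_ne_zero), one_div, mul_inv]

namespace LieConformalAlgebra

open Filter Finset

variable {L : Type} [AddCommGroup L] [Module ℂ L] (A : LieConformalAlgebra L)

/-- The coefficient `(n!)⁻¹ • a_(n) b` of `λⁿ` in the `λ`-bracket `[a_λ b]`. In terms of these
coefficients the axioms of a Lie conformal algebra involve binomial coefficients only. -/
def bracketCoeff (n : ℕ) : L →ₗ[ℂ] L →ₗ[ℂ] L :=
  (Nat.factorial n : ℂ)⁻¹ • A.prd n

theorem eventually_bracketCoeff_eq_zero (a b : L) : ∀ᶠ n in atTop, A.bracketCoeff n a b = 0 := by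
  obtain ⟨N, hN⟩ := A.bound a b
  filter_upwards [eventually_ge_atTop N] with n hn
  simp [bracketCoeff, hN n hn]

theorem finite_support_smul_bracketCoeff (l : ℂ) (a b : L) :
    (Function.support fun n => l ^ n • A.bracketCoeff n a b).Finite := by
  have h := A.eventually_bracketCoeff_eq_zero a b
  rw [← Nat.cofinite_eq_atTop] at h
  exact (eventually_cofinite.1 h).subset fun n hn hzero => hn (by simp [hzero])

/-- The `λ`-bracket `[a_λ b]` evaluated at the complex number `λ = l`. -/
def bracketAt (l : ℂ) : L →ₗ[ℂ] L →ₗ[ℂ] L :=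
  LinearMap.mk₂ ℂ (fun a b => ∑ᶠ n, l ^ n • A.bracketCoeff n a b)
    (fun a a' b => by
      simp only [map_add, LinearMap.add_apply, smul_add]
      exact finsum_add_distrib (A.finite_support_smul_bracketCoeff l a b)
        (A.finite_support_smul_bracketCoeff l a' b))
    (fun c a b => by simp only [map_smul, LinearMap.smul_apply, smul_finsum, smul_comm c])
    (fun a b b' => by
      simp only [map_add, smul_add]
      exact finsum_add_distrib (A.finite_support_smul_bracketCoeff l a b)
        (A.finite_support_smul_bracketCoeff l a b'))
    (fun c a b => by simp only [map_smul, smul_finsum, smul_comm c])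

theorem bracketAt_apply (l : ℂ) (a b : L) :
    A.bracketAt l a b = ∑ᶠ n, l ^ n • A.bracketCoeff n a b :=
  rfl

theorem eventually_bracketAt_eq_sum_range (l : ℂ) (a b : L) :
    ∀ᶠ M in atTop, A.bracketAt l a b = ∑ n ∈ range M, l ^ n • A.bracketCoeff n a b :=
  eventually_finsum_eq_sum_range <|
    (A.eventually_bracketCoeff_eq_zero a b).mono fun n hn => by rw [hn, smul_zero]

theorem bracketCoeff_zero_D_left (a b : L) : A.bracketCoeff 0 (A.D a) b = 0 := by
  simp [bracketCoeff, A.sesq]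

theorem bracketCoeff_succ_D_left (n : ℕ) (a b : L) :
    A.bracketCoeff (n + 1) (A.D a) b = -A.bracketCoeff n a b := by
  rw [bracketCoeff, LinearMap.smul_apply, LinearMap.smul_apply, A.sesq, neg_smul, smul_neg,
    smul_smul, inv_factorial_succ_mul]
  rfl

theorem bracketCoeff_zero_D_right (a b : L) :
    A.bracketCoeff 0 a (A.D b) = A.D (A.bracketCoeff 0 a b) := by
  simp [bracketCoeff, A.sesq']

theorem bracketCoeff_succ_D_right (n : ℕ) (a b : L) :
    A.bracketCoeff (n + 1) a (A.D b) = A.D (A.bracketCoeff (n + 1) a b) + A.bracketCoeff n a b := by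
  rw [bracketCoeff, LinearMap.smul_apply, LinearMap.smul_apply, A.sesq', smul_add, smul_smul,
    inv_factorial_succ_mul, ← map_smul]
  rfl

theorem bracketAt_D_left (l : ℂ) (a b : L) :
    A.bracketAt l (A.D a) b = -l • A.bracketAt l a b := by
  obtain ⟨M, hDa, ha⟩ := (((tendsto_add_atTop_nat 1).eventually
    (A.eventually_bracketAt_eq_sum_range l (A.D a) b)).and
      (A.eventually_bracketAt_eq_sum_range l a b)).exists
  rw [hDa, ha, sum_range_succ', bracketCoeff_zero_D_left, smul_zero, add_zero, smul_sum]
  refine sum_congr rfl fun n _ => ?_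
  rw [bracketCoeff_succ_D_left, smul_neg, smul_smul, pow_succ', neg_mul, neg_smul]

theorem bracketAt_D_right (l : ℂ) (a b : L) :
    A.bracketAt l a (A.D b) = A.D (A.bracketAt l a b) + l • A.bracketAt l a b := by
  obtain ⟨M, hDb, hb, hb'⟩ := (((tendsto_add_atTop_nat 1).eventually
    (A.eventually_bracketAt_eq_sum_range l a (A.D b))).and
      ((A.eventually_bracketAt_eq_sum_range l a b).and
        ((tendsto_add_atTop_nat 1).eventually (A.eventually_bracketAt_eq_sum_range l a b)))).exists
  nth_rewrite 1 [hDb, hb', hb]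
  rw [sum_range_succ', sum_range_succ' (fun n => l ^ n • A.bracketCoeff n a b), map_add, map_sum,
    smul_sum, add_right_comm, ← sum_add_distrib, bracketCoeff_zero_D_right, map_smul]
  refine congrArg (· + _) (sum_congr rfl fun n _ => ?_)
  rw [bracketCoeff_succ_D_right, smul_add, map_smul, smul_smul, pow_succ']

theorem bracketAt_aeval_D_left (q : ℂ[X]) (l : ℂ) (a b : L) :
    A.bracketAt l (aeval A.D q a) b = q.eval (-l) • A.bracketAt l a b := by
  induction q using Polynomial.induction_on generalizing a with
  | C c => simp
  | add p q hp hq => simp only [map_add, LinearMap.add_apply, hp, hq, eval_add, add_smul]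
  | monomial n c ih =>
    rw [pow_succ, ← mul_assoc, map_mul, aeval_X, Module.End.mul_apply, ih, bracketAt_D_left,
      smul_smul, eval_mul_X]

theorem bracketAt_aeval_D_right (q : ℂ[X]) (l : ℂ) (a b : L) :
    A.bracketAt l a (aeval A.D q b) = aeval A.D (q.comp (X + C l)) (A.bracketAt l a b) := by
  induction q using Polynomial.induction_on generalizing b with
  | C c => simp
  | add p q hp hq => simp only [map_add, LinearMap.add_apply, hp, hq, add_comp]
  | monomial n c ih =>
    rw [pow_succ, ← mul_assoc, map_mul, aeval_X, Module.End.mul_apply, ih, bracketAt_D_right,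
      mul_X_comp, map_mul, Module.End.mul_apply]
    simp

theorem bracketCoeff_jacobi (m n : ℕ) (a b c : L) :
    A.bracketCoeff m a (A.bracketCoeff n b c) - A.bracketCoeff n b (A.bracketCoeff m a c)
      = ∑ p ∈ antidiagonal m,
        ((p.2 + n).choose p.2 : ℂ) • A.bracketCoeff (p.2 + n) (A.bracketCoeff p.1 a b) c := by
  have hjacobi := congrArg (((Nat.factorial m : ℂ)⁻¹ * (Nat.factorial n : ℂ)⁻¹) • ·)
    (A.jacobi m n a b c)
  simp only [bracketCoeff, LinearMap.smul_apply, map_smul, smul_smul] at hjacobi ⊢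
  rw [mul_comm (Nat.factorial n : ℂ)⁻¹, ← smul_sub, hjacobi, smul_sum,
    Finset.Nat.sum_antidiagonal_eq_sum_range_succ_mk]
  refine sum_congr rfl fun j hj => ?_
  obtain ⟨i, rfl⟩ := Nat.exists_eq_add_of_le (mem_range_succ_iff.1 hj)
  rw [Nat.add_sub_cancel_left, add_assoc, Nat.add_sub_cancel_left, smul_smul]
  congr 1
  linear_combination (Nat.factorial n : ℂ)⁻¹ * choose_mul_inv_factorial j i
    - (Nat.factorial j : ℂ)⁻¹ * choose_mul_inv_factorial i n

theorem bracketCoeff_skew (n : ℕ) (a b : L) :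
    A.bracketCoeff n a b = -∑ᶠ j, ((n + j).choose n : ℂ) • (-1 : ℂ) ^ (n + j) •
      (A.D ^ j) (A.bracketCoeff (n + j) b a) := by
  simp only [bracketCoeff, LinearMap.smul_apply, map_smul, smul_smul, Module.End.pow_apply]
  rw [A.skew, smul_neg, smul_finsum]
  refine congrArg _ (finsum_congr fun j => ?_)
  rw [smul_smul]
  congr 1
  linear_combination -(-1) ^ (n + j) * choose_mul_inv_factorial n j

theorem sum_range_smul_bracketCoeff_jacobi {a b c : L} {M : ℕ}
    (hM : ∀ i j, M ≤ i + j → A.bracketCoeff i (A.bracketCoeff j a b) c = 0) (l m : ℂ) :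
    ∑ n ∈ range M, ∑ i ∈ range M, (l ^ i * m ^ n) •
        (A.bracketCoeff i a (A.bracketCoeff n b c) - A.bracketCoeff n b (A.bracketCoeff i a c))
      = ∑ s ∈ range M, ∑ j ∈ range M,
        ((l + m) ^ s * l ^ j) • A.bracketCoeff s (A.bracketCoeff j a b) c := by
  calc _ = ∑ n ∈ range M, ∑ i ∈ range M, ∑ p ∈ antidiagonal i,
          (l ^ p.1 * ((p.2 + n).choose p.2 • (l ^ p.2 * m ^ n))) •
            A.bracketCoeff (p.2 + n) (A.bracketCoeff p.1 a b) c := by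
        refine sum_congr rfl fun n _ => sum_congr rfl fun i _ => ?_
        rw [bracketCoeff_jacobi, smul_sum]
        refine sum_congr rfl fun p hp => ?_
        rw [smul_smul, ← mem_antidiagonal.1 hp, pow_add, nsmul_eq_mul]
        congr 1
        ring
    _ = ∑ n ∈ range M, ∑ j ∈ range M, ∑ i ∈ range M,
          (l ^ j * ((i + n).choose i • (l ^ i * m ^ n))) •
            A.bracketCoeff (i + n) (A.bracketCoeff j a b) c := by
        refine sum_congr rfl fun n _ => sum_range_sum_antidiagonal (f := fun j i =>
          (l ^ j * ((i + n).choose i • (l ^ i * m ^ n))) •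
            A.bracketCoeff (i + n) (A.bracketCoeff j a b) c) fun j i hji => ?_
        rw [hM _ _ (by omega), smul_zero]
    _ = ∑ j ∈ range M, l ^ j • ∑ s ∈ range M,
          (l + m) ^ s • A.bracketCoeff s (A.bracketCoeff j a b) c := by
        rw [sum_comm]
        refine sum_congr rfl fun j _ => ?_
        rw [sum_range_add_pow_smul (Commute.all l m) fun s hs => hM s j (by omega), sum_comm]
        simp only [smul_sum, smul_smul]
    _ = _ := by
        simp only [smul_sum, smul_smul, mul_comm (l ^ _)]
        exact sum_comm

theorem bracketAt_jacobi (l m : ℂ) (a b c : L) :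
    A.bracketAt l a (A.bracketAt m b c) - A.bracketAt m b (A.bracketAt l a c)
      = A.bracketAt (l + m) (A.bracketAt l a b) c := by
  have hab := A.eventually_bracketCoeff_eq_zero a b
  have hleft (x : L) : ∀ᶠ n in atTop, (A.bracketCoeff n).flip c x = 0 :=
    A.eventually_bracketCoeff_eq_zero x c
  obtain ⟨M, habc, hbac, hab_c, hvanish⟩ :=
    ((eventually_finsum_smul_apply_finsum_smul (A.eventually_bracketCoeff_eq_zero a)
      (A.eventually_bracketCoeff_eq_zero b c) l m).and
    ((eventually_finsum_smul_apply_finsum_smul (A.eventually_bracketCoeff_eq_zero b)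
      (A.eventually_bracketCoeff_eq_zero a c) m l).and
    ((eventually_finsum_smul_apply_finsum_smul hleft hab (l + m) l).and
      (eventually_forall_add_le_apply_eq_zero hleft hab)))).exists
  have hjacobi := A.sum_range_smul_bracketCoeff_jacobi hvanish l m
  simp only [LinearMap.flip_apply] at hab_c
  simp only [smul_sub, sum_sub_distrib] at hjacobi
  simp only [bracketAt_apply]
  rw [habc, hbac, hab_c, sum_comm]
  simpa only [mul_comm (m ^ _)] using hjacobi

theorem eventually_bracketAt_eq_neg_sum_range (l : ℂ) (a b : L) :
    ∀ᶠ M in atTop, A.bracketAt l a b = -∑ n ∈ range M,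
      ((algebraMap ℂ (Module.End ℂ L) l + A.D) ^ n) ((-1 : ℂ) ^ n • A.bracketCoeff n b a) := by
  obtain ⟨N, hN⟩ := eventually_atTop.1 (A.eventually_bracketCoeff_eq_zero b a)
  filter_upwards [A.eventually_bracketAt_eq_sum_range l a b, eventually_ge_atTop N] with M hM hNM
  have hvanish (n : ℕ) (hn : M ≤ n) : (-1 : ℂ) ^ n • A.bracketCoeff n b a = 0 := by
    rw [hN n (hNM.trans hn), smul_zero]
  have hbinom := sum_range_add_pow_smul (Algebra.commutes l A.D) hvanish
  simp only [Module.End.smul_def] at hbinom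
  rw [hM, hbinom, ← sum_neg_distrib]
  refine sum_congr rfl fun n _ => ?_
  have hsupport : (Function.support fun j => ((n + j).choose n : ℂ) • (-1 : ℂ) ^ (n + j) •
      (A.D ^ j) (A.bracketCoeff (n + j) b a)) ⊆ range M := by
    intro j hj
    rw [coe_range, Set.mem_Iio]
    by_contra! hMj
    exact hj (by simp [hN (n + j) (by omega)])
  rw [bracketCoeff_skew, finsum_eq_sum_of_support_subset _ hsupport, smul_neg, smul_sum]
  refine congrArg _ (sum_congr rfl fun j _ => ?_)
  rw [LinearMap.smul_apply, Module.End.mul_apply, ← map_pow, Module.algebraMap_end_apply, map_smul,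
    Nat.cast_smul_eq_nsmul, smul_comm]

end LieConformalAlgebra

namespace RankOneContext

open Filter Finset

variable {L : Type} [AddCommGroup L] [Module ℂ L] (A : RankOneContext L) {i j k : ℤ}

theorem bracketCoeff_bas (h : i + j = k) (n : ℕ) :
    A.bracketCoeff n (A.bas i) (A.bas j) = aeval A.D ((A.sp i j).coeff n) (A.bas k) := by
  subst h
  rw [LieConformalAlgebra.bracketCoeff, LinearMap.smul_apply, LinearMap.smul_apply, A.sp_brkt,
    inv_smul_smul₀ (Nat.cast_ne_zero.2 n.factorial_ne_zero), aeval_endomorphism]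
  simp only [Module.End.pow_apply]

theorem bracketAt_bas (h : i + j = k) (l : ℂ) :
    A.bracketAt l (A.bas i) (A.bas j) = aeval A.D ((A.sp i j).eval (C l)) (A.bas k) := by
  obtain ⟨M, hM, hdeg⟩ := ((A.eventually_bracketAt_eq_sum_range l (A.bas i) (A.bas j)).and
    (eventually_gt_atTop (A.sp i j).natDegree)).exists
  rw [hM, eval_eq_sum_range' hdeg, map_sum, LinearMap.sum_apply]
  refine sum_congr rfl fun n _ => ?_
  rw [A.bracketCoeff_bas h, ← C_pow, mul_comm, ← smul_eq_C_mul, map_smul, LinearMap.smul_apply]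

theorem bracketAt_bas_swap (h : i + j = k) (l : ℂ) :
    A.bracketAt l (A.bas j) (A.bas i) = -aeval A.D ((A.sp i j).eval (-C l - X)) (A.bas k) := by
  obtain ⟨M, hM, hdeg⟩ := ((A.eventually_bracketAt_eq_neg_sum_range l (A.bas j) (A.bas i)).and
    (eventually_gt_atTop (A.sp i j).natDegree)).exists
  rw [hM, eval_eq_sum_range' hdeg, map_sum, LinearMap.sum_apply]
  refine congrArg _ (sum_congr rfl fun n _ => ?_)
  have hpow : (-C l - X : ℂ[X]) ^ n = (C l + X) ^ n * C ((-1) ^ n) := by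
    rw [← neg_add', neg_pow, mul_comm, C_pow, C_neg, C_1]
  rw [A.bracketCoeff_bas h, hpow, mul_comm, mul_assoc, ← smul_eq_C_mul, map_mul,
    Module.End.mul_apply, map_smul, map_smul, LinearMap.smul_apply, map_smul, map_pow, map_add,
    aeval_C, aeval_X]

theorem aeval_D_bas_injective (hi : A.G i ≠ ⊥) :
    Function.Injective fun q : ℂ[X] => aeval A.D q (A.bas i) := by
  have hindep : LinearIndependent ℂ fun n : ℕ => (A.D ^ n) (A.bas i) := by
    simpa only [Module.End.pow_apply] using A.bas_indep i hi
  intro p q hpq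
  refine sub_eq_zero.1 (linearIndependent_powers_iff_aeval _ _ |>.1 hindep _ ?_)
  rw [map_sub, LinearMap.sub_apply, sub_eq_zero]
  exact hpq

theorem sp_swap_eval (h : A.G (i + j) ≠ ⊥) (l : ℂ) :
    (A.sp j i).eval (C l) = -(A.sp i j).eval (-C l - X) := by
  refine A.aeval_D_bas_injective h ?_
  simp only [map_neg, LinearMap.neg_apply]
  rw [← A.bracketAt_bas (add_comm j i), A.bracketAt_bas_swap rfl]

/-- The polynomial in `λ` by which `L₀` acts on `Lᵢ`, namely `p_{0,i}` at `∂ = 0`; by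
`sp_zero_left` it is all of `p_{0,i}`. -/
def weight (i : ℤ) : ℂ[X] :=
  (A.sp 0 i).map (evalRingHom 0)

theorem bracketAt_bas_zero_bas_zero (l : ℂ) : A.bracketAt l (A.bas 0) (A.bas 0) = 0 := by
  simp [LieConformalAlgebra.bracketAt_apply, LieConformalAlgebra.bracketCoeff,
    A.abelian0 _ _ (A.bas_mem 0) _ (A.bas_mem 0)]

theorem sp_zero_left (i : ℤ) : A.sp 0 i = (A.weight i).map C := by
  by_cases hi : A.G i = ⊥
  · simp [weight, A.sp_zero 0 i (.inr (.inl hi))]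
  refine eq_map_C_of_eval_comp_mul_symm fun l m => A.aeval_D_bas_injective hi ?_
  have hjacobi := A.bracketAt_jacobi l m (A.bas 0) (A.bas 0) (A.bas i)
  rw [A.bracketAt_bas_zero_bas_zero, map_zero, LinearMap.zero_apply, sub_eq_zero] at hjacobi
  simpa only [A.bracketAt_bas (zero_add i), LieConformalAlgebra.bracketAt_aeval_D_right,
    map_mul, Module.End.mul_apply] using hjacobi

theorem bracketAt_bas_zero_bas (i : ℤ) (l : ℂ) :
    A.bracketAt l (A.bas 0) (A.bas i) = (A.weight i).eval l • A.bas i := by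
  rw [A.bracketAt_bas (zero_add i), sp_zero_left, eval_C_map_C, aeval_C,
    Module.algebraMap_end_apply]

theorem bracketAt_bas_bas_zero (i : ℤ) (l : ℂ) :
    A.bracketAt l (A.bas i) (A.bas 0) = -aeval A.D ((A.weight i).comp (-C l - X)) (A.bas i) := by
  rw [A.bracketAt_bas_swap (zero_add i), sp_zero_left, eval_map, comp]

theorem weight_ne_zero_iff : A.weight i ≠ 0 ↔ A.sp 0 i ≠ 0 := by
  rw [sp_zero_left, Polynomial.map_ne_zero_iff C_injective]

theorem weight_mul_sp_neg_self (k : ℤ) (l : ℂ) :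
    C (C (-(A.weight k).eval l)) * A.sp (-k) k
      = C (C ((A.weight (-k)).eval l)) * (A.sp (-k) k).comp (X + C (C l)) := by
  refine eq_of_infinite_eval_C_eq Set.infinite_univ fun m _ =>
    A.aeval_D_bas_injective A.supp_zero ?_
  have hjacobi := A.bracketAt_jacobi l m (A.bas 0) (A.bas (-k)) (A.bas k)
  rw [A.bracketAt_bas (neg_add_cancel k), LieConformalAlgebra.bracketAt_aeval_D_right,
    A.bracketAt_bas_zero_bas_zero, map_zero, zero_sub] at hjacobi
  simp only [A.bracketAt_bas_zero_bas, map_smul, LinearMap.smul_apply,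
    A.bracketAt_bas (neg_add_cancel k)] at hjacobi
  simp only [eval_mul, eval_C, eval_comp, eval_add, eval_X, ← C_add]
  simpa only [← smul_eq_C_mul, map_smul, LinearMap.smul_apply, ← neg_smul, add_comm m]
    using hjacobi

theorem weight_neg (hk : A.sp (-k) k ≠ 0) : A.weight (-k) = -A.weight k := by
  refine Polynomial.funext fun l => ?_
  rw [eval_neg]
  exact (C_injective (eq_of_C_mul_eq_C_mul_comp_X_add_C hk (A.weight_mul_sp_neg_self k l))).symm

theorem natDegree_sp_neg_self (hweight : A.weight k ≠ 0) : (A.sp (-k) k).natDegree = 0 := by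
  by_cases hk : A.sp (-k) k = 0
  · rw [hk, natDegree_zero]
  obtain ⟨l, hl⟩ : ∃ l, l ≠ 0 ∧ (A.weight k).eval l ≠ 0 := by
    by_contra! h
    refine mul_ne_zero X_ne_zero hweight (Polynomial.funext fun l => ?_)
    simpa [or_iff_not_imp_left] using h l
  have hcoeff : C (C (-(A.weight k).eval l)) ≠ 0 := by simpa using hl.2
  refine natDegree_eq_zero_of_comp_X_add_C_eq (C_ne_zero.2 hl.1) ?_
  have hjacobi := A.weight_mul_sp_neg_self k l
  rw [A.weight_neg hk, eval_neg] at hjacobi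
  exact (mul_left_cancel₀ hcoeff hjacobi).symm

theorem sp_self_neg_ne_zero (hk : A.sp (-k) k ≠ 0) (hdeg : (A.sp (-k) k).natDegree = 0) :
    A.sp k (-k) ≠ 0 := by
  intro hzero
  have hswap := A.sp_swap_eval (i := -k) (j := k) (by simpa using A.supp_zero) 0
  rw [eq_C_of_natDegree_eq_zero hdeg, eval_C, hzero, eval_zero, zero_eq_neg] at hswap
  rw [eq_C_of_natDegree_eq_zero hdeg, hswap, C_0] at hk
  exact hk rfl

theorem sp_self_jacobi {P : ℂ[X]} (hP : A.sp (-k) k = C P) (hk : A.G k ≠ ⊥) (l m : ℂ) :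
    ((A.sp k k).eval (C m)).comp (X + C l) * (A.sp (-k) (k + k)).eval (C l)
        + P.comp (X + C m) * (A.weight k).comp (-C m - X)
      = C (P.eval (-(l + m)) * (A.weight k).eval (l + m)) := by
  refine A.aeval_D_bas_injective hk ?_
  have hjacobi := A.bracketAt_jacobi l m (A.bas (-k)) (A.bas k) (A.bas k)
  simp only [A.bracketAt_bas (neg_add_cancel k), A.bracketAt_bas (rfl : k + k = k + k), hP, eval_C,
    LieConformalAlgebra.bracketAt_aeval_D_right, LieConformalAlgebra.bracketAt_aeval_D_left,
    A.bracketAt_bas (neg_add_cancel_left k k), A.bracketAt_bas_bas_zero,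
    A.bracketAt_bas_zero_bas, map_neg, sub_neg_eq_add] at hjacobi
  simpa only [map_add, map_mul, LinearMap.add_apply, Module.End.mul_apply, aeval_C,
    Module.algebraMap_end_apply] using hjacobi

theorem natDegree_add_natDegree_weight_le_two {P : ℂ[X]} (hP : A.sp (-k) k = C P) (hP0 : P ≠ 0)
    (hweight : A.weight k ≠ 0) : P.natDegree + (A.weight k).natDegree ≤ 2 := by
  have hk : A.G k ≠ ⊥ := fun hk => hP0 <| by
    simpa [hP] using A.sp_zero (-k) k (.inr (.inl hk))
  have hneg : P.comp (-X) ≠ 0 := by simpa using hP0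
  have hbound : (P.comp (-X) * A.weight k).natDegree ≤ 2 := by
    refine natDegree_le_two_of_eval_add_sub_eval_sub (q := (A.sp k k).map (evalRingHom 0))
      (r := fun l => ((A.sp (-k) (k + k)).eval (C l)).eval (-l)) fun l m => ?_
    -- At `∂ = -λ` both terms without `p_{k,k}` become values of one polynomial in one variable.
    have hjacobi := congrArg (eval (-l)) (A.sp_self_jacobi hP hk l m)
    simp only [eval_add, eval_mul, eval_sub, eval_neg, eval_comp, eval_X, eval_C,
      neg_add_cancel, eval_C_map_evalRingHom, sub_neg_eq_add, neg_add_eq_sub, neg_sub] at hjacobi ⊢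
    linear_combination -hjacobi
  rwa [natDegree_mul hneg hweight, natDegree_comp, natDegree_neg, natDegree_X, mul_one] at hbound

end RankOneContext

/-- for `k ∈ Supp₁(L)`: (1) `-k ∈ Supp₁(L)`; (2) `p_{-k,k}` does
not involve `λ`; (3) `deg p_{-k,k}(∂) + deg p_{0,k}(λ) ≤ 2`. -/
theorem supp1_symmetry_and_degree_bound
    {L : Type} [AddCommGroup L] [Module ℂ L] (C : RankOneContext L)
    (k : ℤ) (hk : C.G k ≠ ⊥) (hk1 : C.sp (-k) k ≠ 0) (hk0 : C.sp 0 k ≠ 0) :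
    (C.G (-k) ≠ ⊥ ∧ C.sp k (-k) ≠ 0 ∧ C.sp 0 (-k) ≠ 0) ∧
    (C.sp (-k) k).natDegree = 0 ∧
    tdeg (C.sp (-k) k) + tdeg (C.sp 0 k) ≤ 2 := by
  have hweight : C.weight k ≠ 0 := C.weight_ne_zero_iff.2 hk0
  have hdeg : (C.sp (-k) k).natDegree = 0 := C.natDegree_sp_neg_self hweight
  have hconst := eq_C_of_natDegree_eq_zero hdeg
  refine ⟨⟨fun hG => hk1 (C.sp_zero _ _ (.inl hG)), C.sp_self_neg_ne_zero hk1 hdeg, ?_⟩, hdeg, ?_⟩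
  · rw [← C.weight_ne_zero_iff, C.weight_neg hk1]
    exact neg_ne_zero.2 hweight
  · rw [C.sp_zero_left k, hconst, tdeg_C, tdeg_map_C]
    refine C.natDegree_add_natDegree_weight_le_two hconst (fun hP => hk1 ?_) hweight
    rw [hconst, hP, Polynomial.C_0]
end
end

section
/- Let n ≥ 3 be an integer and ε ∈ {1,−1}. Then there do not exist polynomials g, h ∈ ℂ[x,y] such that, as polynomials in the three variables ∂, λ, μ, (λ+μ)ⁿ + ε(∂+μ)ⁿ = (∂+λ+2μ)·g(∂+λ, μ)·h(∂, λ). -/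
open scoped BigOperators Classical ENNReal
open Polynomial

noncomputable section

/- Restrict to the plane `∂ = -λ`. There `g(∂ + λ, μ)` becomes a polynomial in `μ` alone and
`h(∂, λ)` one in `λ` alone, so the matrix of coefficients of `λ ^ i * μ ^ j` in their product has
vanishing `2 × 2` minors. The left-hand side becomes `(μ + λ) ^ n + ε * (μ - λ) ^ n`, whose
coefficients `(1 + (-1) ^ i * ε) * n.choose i` lie on the antidiagonal `i + j = n`, so the minors
force the product of any two of them to vanish. Taking `i = 0, 2` and `i = 1, 3` gives
`(1 + ε) ^ 2 = 0 = (1 - ε) ^ 2`, which is impossible since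
`(2 - ε) * (1 + ε) ^ 2 + (2 + ε) * (1 - ε) ^ 2 = 4`. -/

section

open scoped Polynomial.Bivariate

section CommSemiring

variable {R : Type*} [CommSemiring R]

theorem coeff_coeff_map_C_mul_C (p q : R[X]) (i j : ℕ) :
    ((p.map C * C q).coeff j).coeff i = p.coeff j * q.coeff i := by
  rw [coeff_mul_C, coeff_map, coeff_C_mul]

theorem coeff_coeff_minor_map_C_mul_C (p q : R[X]) (i j k l : ℕ) :
    ((p.map C * C q).coeff j).coeff i * ((p.map C * C q).coeff l).coeff k =
      ((p.map C * C q).coeff j).coeff k * ((p.map C * C q).coeff l).coeff i := by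
  simp only [coeff_coeff_map_C_mul_C]
  ring

theorem coeff_coeff_Y_add_C_C_mul_X_pow (a : R) (n i j : ℕ) :
    (((Y + C (C a * X)) ^ n : R[X][Y]).coeff j).coeff i =
      if i + j = n then a ^ i * n.choose i else 0 := by
  rw [coeff_X_add_C_pow, mul_pow, ← C_pow, ← C_eq_natCast, coeff_mul_C, coeff_C_mul_X_pow]
  rcases le_or_gt j n with hj | hj
  · by_cases hij : i + j = n
    · obtain rfl : i = n - j := by lia
      simp [hij, Nat.choose_symm hj]
    · rw [if_neg hij, if_neg (by lia), zero_mul]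
  · rw [Nat.choose_eq_zero_of_lt hj, if_neg (by lia : i + j ≠ n), Nat.cast_zero, mul_zero]

end CommSemiring

section CommRing

variable {R : Type*} [CommRing R]

theorem coeff_coeff_add_pow_add_sub_pow (n : ℕ) (ε : R) (i j : ℕ) :
    (((Y + C X) ^ n + C (C ε) * (Y - C X) ^ n : R[X][Y]).coeff j).coeff i =
      if i + j = n then (1 + (-1) ^ i * ε) * n.choose i else 0 := by
  have hadd : (Y + C X : R[X][Y]) = Y + C (C 1 * X) := by simp
  have hsub : (Y - C X : R[X][Y]) = Y + C (C (-1) * X) := by simp [sub_eq_add_neg]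
  rw [hadd, hsub, coeff_add, coeff_C_mul, coeff_add, coeff_C_mul]
  simp only [coeff_coeff_Y_add_C_C_mul_X_pow]
  split_ifs <;> ring

theorem mul_eq_zero_of_add_pow_add_sub_pow_eq [IsAddTorsionFree R] {n : ℕ} {ε : R} {p q : R[X]}
    (hpq : ((Y + C X) ^ n + C (C ε) * (Y - C X) ^ n : R[X][Y]) = p.map C * C q)
    {i k : ℕ} (hi : i ≤ n) (hk : k ≤ n) (hik : i ≠ k) :
    (1 + (-1) ^ i * ε) * (1 + (-1) ^ k * ε) = 0 := by
  have hminor :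
      (1 + (-1) ^ i * ε) * n.choose i * ((1 + (-1) ^ k * ε) * n.choose k) = 0 := by
    have hcross : k + (n - i) ≠ n := by lia
    simpa only [← hpq, coeff_coeff_add_pow_add_sub_pow, Nat.add_sub_of_le hi,
      Nat.add_sub_of_le hk, if_true, if_neg hcross, zero_mul]
      using coeff_coeff_minor_map_C_mul_C p q i (n - i) k (n - k)
  have hchoose : n.choose i * n.choose k ≠ 0 :=
    mul_ne_zero (Nat.choose_pos hi).ne' (Nat.choose_pos hk).ne'
  rw [mul_mul_mul_comm, mul_comm, ← Nat.cast_mul, ← nsmul_eq_mul] at hminor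
  exact (nsmul_eq_zero_iff_right hchoose).mp hminor

theorem add_pow_add_sub_pow_ne_map_C_mul_C [Nontrivial R] [IsAddTorsionFree R] {n : ℕ}
    (hn : 3 ≤ n) (ε : R) (p q : R[X]) :
    ((Y + C X) ^ n + C (C ε) * (Y - C X) ^ n : R[X][Y]) ≠ p.map C * C q := by
  intro hpq
  have hadd : (1 + ε) ^ 2 = 0 := by
    linear_combination mul_eq_zero_of_add_pow_add_sub_pow_eq hpq (i := 0) (k := 2)
      (by lia) (by lia) (by lia)
  have hsub : (1 - ε) ^ 2 = 0 := by
    linear_combination mul_eq_zero_of_add_pow_add_sub_pow_eq hpq (i := 1) (k := 3)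
      (by lia) (by lia) (by lia)
  have hfour : (4 : ℕ) • (1 : R) = 0 := by
    rw [nsmul_one, Nat.cast_ofNat]
    linear_combination (2 - ε) * hadd + (2 + ε) * hsub
  exact one_ne_zero ((nsmul_eq_zero_iff_right four_ne_zero).mp hfour)

variable (R) in
/-- Restriction of polynomials in `(∂, λ, μ)` to the plane `∂ = -λ`. The result lies in `R[λ][μ]`:
the inner variable is `λ` and the outer variable is `μ`. -/
def restrictAntidiagonal : MvPolynomial (Fin 3) R →ₐ[R] R[X][Y] :=
  MvPolynomial.aeval ![-C (X : R[X]), C X, Y]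

theorem restrictAntidiagonal_aeval_add (g : MvPolynomial (Fin 2) R) :
    restrictAntidiagonal R
        (MvPolynomial.aeval ![MvPolynomial.X 0 + MvPolynomial.X 1, MvPolynomial.X 2] g) =
      (MvPolynomial.aeval ![0, X] g : R[X]).map C := by
  change _ = mapAlgHom (CAlgHom (R := R)) (MvPolynomial.aeval ![0, X] g : R[X])
  rw [MvPolynomial.comp_aeval_apply, MvPolynomial.comp_aeval_apply]
  congr 2
  ext1 i
  fin_cases i <;> simp [restrictAntidiagonal]

theorem restrictAntidiagonal_aeval_X_zero_X_one (h : MvPolynomial (Fin 2) R) :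
    restrictAntidiagonal R (MvPolynomial.aeval ![MvPolynomial.X 0, MvPolynomial.X 1] h) =
      C (MvPolynomial.aeval ![-X, X] h) := by
  change _ = CAlgHom (R := R) (MvPolynomial.aeval ![-X, X] h : R[X])
  rw [MvPolynomial.comp_aeval_apply, MvPolynomial.comp_aeval_apply]
  congr 2
  ext1 i
  fin_cases i <;> simp [restrictAntidiagonal]

theorem restrictAntidiagonal_power_sum (n : ℕ) (ε : R) :
    restrictAntidiagonal R ((MvPolynomial.X 1 + MvPolynomial.X 2) ^ n
        + MvPolynomial.C ε * (MvPolynomial.X 0 + MvPolynomial.X 2) ^ n) =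
      (Y + C X) ^ n + C (C ε) * (Y - C X) ^ n := by
  simp [restrictAntidiagonal, add_comm, sub_eq_add_neg]

theorem no_factorization_of_power_sum_general [Nontrivial R] [IsAddTorsionFree R]
    (n : ℕ) (hn : 3 ≤ n) (ε : R) :
    ¬ ∃ g h : MvPolynomial (Fin 2) R,
      (MvPolynomial.X 1 + MvPolynomial.X 2 : MvPolynomial (Fin 3) R) ^ n
          + MvPolynomial.C ε * (MvPolynomial.X 0 + MvPolynomial.X 2) ^ n
        = (MvPolynomial.aeval ![MvPolynomial.X 0 + MvPolynomial.X 1, MvPolynomial.X 2] g)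
            * (MvPolynomial.aeval ![MvPolynomial.X 0, MvPolynomial.X 1] h) := by
  rintro ⟨g, h, hgh⟩
  have hrestrict := congrArg (restrictAntidiagonal R) hgh
  rw [restrictAntidiagonal_power_sum, map_mul, restrictAntidiagonal_aeval_add,
    restrictAntidiagonal_aeval_X_zero_X_one] at hrestrict
  exact add_pow_add_sub_pow_ne_map_C_mul_C hn ε _ _ hrestrict

end CommRing

end

/-- for `n ≥ 3` and `ε = ±1` there are no polynomials
`g, h ∈ ℂ[x,y]` with
`(λ+μ)ⁿ + ε(∂+μ)ⁿ = (∂+λ+2μ) g(∂+λ, μ) h(∂, λ)` in `ℂ[∂,λ,μ]`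
(variables `X 0 = ∂`, `X 1 = λ`, `X 2 = μ`). -/
theorem no_factorization_of_power_sum
    (n : ℕ) (hn : 3 ≤ n) (ε : ℂ) (hε : ε = 1 ∨ ε = -1) :
    ¬ ∃ g h : MvPolynomial (Fin 2) ℂ,
      (MvPolynomial.X 1 + MvPolynomial.X 2 : MvPolynomial (Fin 3) ℂ) ^ n
          + MvPolynomial.C ε * (MvPolynomial.X 0 + MvPolynomial.X 2) ^ n
        = (MvPolynomial.X 0 + MvPolynomial.X 1 + 2 * MvPolynomial.X 2)
            * (MvPolynomial.aeval
                ![MvPolynomial.X 0 + MvPolynomial.X 1, MvPolynomial.X 2] g)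
            * (MvPolynomial.aeval ![MvPolynomial.X 0, MvPolynomial.X 1] h) := by
  rintro ⟨g, h, hgh⟩
  -- `∂ + λ + 2μ` is itself a polynomial in `(∂ + λ, μ)`, so it can be absorbed into `g`.
  refine no_factorization_of_power_sum_general n hn ε
    ⟨(MvPolynomial.X 0 + 2 * MvPolynomial.X 1) * g, h, hgh.trans ?_⟩
  simp [map_ofNat]
end
end
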